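/- If h : (0,∞)² → ℝ is continuous and piecewise generalized polynomial, then h is a pointwise supremum of infima of finitely many generalized polynomial functions; i.e., there exist finitely many generalized polynomial functions f_{jk} (1 ≤ j ≤ J, 1 ≤ k ≤ K_j) such that h(x,y) = max_{1≤j≤J} min_{1≤k≤K_j} f_{jk}(x,y) for all (x,y) ∈ (0,∞)². -/

import Mathlib

open Set

noncomputable section

/-- The open positive quadrant `(0,∞)²`, as a subtype of `ℝ × ℝ`. -/
abbrev PQ : Type := {p : ℝ × ℝ // 0 < p.1 ∧ 0 < p.2}

/-- A generalized polynomial function (signomial) of two variables: a finite sum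
`∑ cᵢ x^{αᵢ₁} y^{αᵢ₂}` with nonzero real coefficients and distinct real exponent pairs. -/
def IsGenPoly (a : PQ → ℝ) : Prop :=
  ∃ (m : ℕ) (c : Fin m → ℝ) (α : Fin m → ℝ × ℝ),
    (∀ i, c i ≠ 0) ∧ Function.Injective α ∧
    ∀ p : PQ, a p = ∑ i, c i * p.1.1 ^ (α i).1 * p.1.2 ^ (α i).2

/-- A basic generalized semialgebraic (semisignomial) subset of `(0,∞)²`. -/
def IsBasicGSA (S : Set PQ) : Prop :=
  ∃ (f : PQ → ℝ) (K : ℕ) (g : Fin K → PQ → ℝ),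
    IsGenPoly f ∧ (∀ k, IsGenPoly (g k)) ∧
    S = {p : PQ | f p = 0 ∧ ∀ k, 0 < g k p}

/-- A generalized semialgebraic set: a finite union of basic ones. -/
def IsGSA (S : Set PQ) : Prop :=
  ∃ (J : ℕ) (T : Fin J → Set PQ), (∀ j, IsBasicGSA (T j)) ∧ S = ⋃ j, T j

/-- `h` is piecewise generalized polynomial: there are finitely many *distinct*
generalized polynomial functions `g i` whose agreement sets with `h` are
generalized semialgebraic and cover `(0,∞)²`. -/
def IsPiecewiseGenPoly (h : PQ → ℝ) : Prop :=
  ∃ (l : ℕ) (g : Fin l → PQ → ℝ),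
    (∀ i, IsGenPoly (g i)) ∧ Function.Injective g ∧
    (∀ i, IsGSA {p : PQ | h p = g i p}) ∧
    ∀ p : PQ, ∃ i, h p = g i p

/-- `h` is a pointwise sup of infs of finitely many generalized polynomial functions. -/
def IsSupInf (h : PQ → ℝ) : Prop :=
  ∃ (J : ℕ) (K : Fin (J + 1) → ℕ)
    (f : (j : Fin (J + 1)) → Fin (K j + 1) → PQ → ℝ),
    (∀ j k, IsGenPoly (f j k)) ∧
    ∀ p : PQ, h p = ⨆ j, ⨅ k, f j k p

/-- Functions on `[A,∞)` given by absolutely convergent sums of `c e^{-γ(t-A)}`, `γ ∈ M`. -/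
def tame (M : AddSubmonoid ℝ) (hM : ∀ x ∈ M, 0 ≤ x) (A : ℝ) : Subring (Set.Ici A → ℝ) where
  carrier := {d | ∃ (ι : Type) (c γ : ι → ℝ), (∀ i, γ i ∈ M) ∧ Summable (fun i => |c i|) ∧
    ∀ t : Set.Ici A, d t = ∑' i, c i * Real.exp (-(γ i) * (t.1 - A))}
  mul_mem' := by
    rintro d d' ⟨ι, c, γ, hγ, hs, hd⟩ ⟨ι', c', γ', hγ', hs', hd'⟩
    have key : ∀ (κ : Type) (c γ : κ → ℝ), (∀ i, γ i ∈ M) → Summable (fun i => |c i|) →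
        ∀ t : Set.Ici A, Summable fun i => ‖c i * Real.exp (-(γ i) * (t.1 - A))‖ := by
      intro κ c γ hγ hs t
      refine Summable.of_nonneg_of_le (fun i => norm_nonneg _) (fun i => ?_) hs
      rw [Real.norm_eq_abs, abs_mul, Real.abs_exp]
      refine mul_le_of_le_one_right (abs_nonneg _) (Real.exp_le_one_iff.2 ?_)
      have := hM _ (hγ i)
      have := t.2
      simp only [Set.mem_Ici] at this
      nlinarith
    refine ⟨ι × ι', fun p => c p.1 * c' p.2, fun p => γ p.1 + γ' p.2,
      fun p => M.add_mem (hγ _) (hγ' _), ?_, fun t => ?_⟩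
    · have := Summable.mul_of_nonneg hs hs' (fun _ => abs_nonneg _) (fun _ => abs_nonneg _)
      simpa only [abs_mul] using this
    · rw [Pi.mul_apply, hd, hd', tsum_mul_tsum_of_summable_norm (key _ _ _ hγ hs t) (key _ _ _ hγ' hs' t)]
      refine tsum_congr fun p => ?_
      have : -(γ p.1 + γ' p.2) * (t.1 - A) = -(γ p.1) * (t.1 - A) + -(γ' p.2) * (t.1 - A) := by ring
      rw [this, Real.exp_add]; ring
  one_mem' := ⟨Unit, fun _ => 1, fun _ => 0, fun _ => M.zero_mem, (hasSum_fintype _).summable,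
    fun t => by simp⟩
  add_mem' := by
    rintro d d' ⟨ι, c, γ, hγ, hs, hd⟩ ⟨ι', c', γ', hγ', hs', hd'⟩
    have key : ∀ (κ : Type) (c γ : κ → ℝ), (∀ i, γ i ∈ M) → Summable (fun i => |c i|) →
        ∀ t : Set.Ici A, Summable fun i => c i * Real.exp (-(γ i) * (t.1 - A)) := by
      intro κ c γ hγ hs t
      refine Summable.of_norm_bounded hs (fun i => ?_)
      rw [Real.norm_eq_abs, abs_mul, Real.abs_exp]
      refine mul_le_of_le_one_right (abs_nonneg _) (Real.exp_le_one_iff.2 ?_)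
      have := hM _ (hγ i)
      have := t.2
      simp only [Set.mem_Ici] at this
      nlinarith
    refine ⟨ι ⊕ ι', Sum.elim c c', Sum.elim γ γ', ?_, ?_, fun t => ?_⟩
    · rintro (i | i)
      · exact hγ i
      · exact hγ' i
    · exact Summable.sum (f := fun i => |Sum.elim c c' i|) hs hs'
    · rw [Pi.add_apply, hd, hd', Summable.tsum_sum]
      · rfl
      · exact key _ _ _ hγ hs t
      · exact key _ _ _ hγ' hs' t
  zero_mem' := ⟨Empty, Empty.elim, Empty.elim, fun i => i.elim, (hasSum_fintype _).summable,
    fun t => by simp⟩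
  neg_mem' := by
    rintro d ⟨ι, c, γ, hγ, hs, hd⟩
    refine ⟨ι, fun i => - c i, γ, hγ, by simpa using hs, fun t => ?_⟩
    simp [hd, tsum_neg]

lemma tame_bound {M : AddSubmonoid ℝ} (hM : ∀ x ∈ M, 0 ≤ x) {A g t c : ℝ} (hg : g ∈ M) (ht : A ≤ t) :
    ‖c * Real.exp (-g * (t - A))‖ ≤ |c| := by
  rw [Real.norm_eq_abs, abs_mul, Real.abs_exp]
  refine mul_le_of_le_one_right (abs_nonneg _) (Real.exp_le_one_iff.2 ?_)
  have := hM _ hg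
  nlinarith

lemma tame_continuous {M : AddSubmonoid ℝ} {hM : ∀ x ∈ M, 0 ≤ x} {A : ℝ} (d : tame M hM A) :
    Continuous d.1 := by
  obtain ⟨d, ι, c, γ, hγ, hs, hd⟩ := d
  have : d = fun t : Set.Ici A => ∑' i, c i * Real.exp (-(γ i) * (t.1 - A)) := funext hd
  simp only [this]
  refine continuous_tsum (fun i => ?_) hs (fun i t => tame_bound hM (hγ i) t.2)
  fun_prop

lemma tame_eventually {M : AddSubmonoid ℝ} {hM : ∀ x ∈ M, 0 ≤ x} (hW : (M : Set ℝ).IsPWO) {A : ℝ}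
    (d : tame M hM A) (h0 : d ≠ 0) : ∃ A', ∀ t : Set.Ici A, A' ≤ t.1 → d.1 t ≠ 0 := by
  obtain ⟨d, ι, c, γ, hγ, hs, hd⟩ := d
  have hsc : Summable c := hs.of_abs
  -- regroup
  let γ' : ι → M := fun i => ⟨γ i, hγ i⟩
  let C : M → ℝ := fun m => ∑' i : γ' ⁻¹' {m}, c i
  have hCabs : Summable fun m => |C m| := by
    have h1 : Summable fun m : M => ∑' i : γ' ⁻¹' {m}, |c i| :=
      (HasSum.tsum_fiberwise hs.hasSum γ').summable
    refine Summable.of_nonneg_of_le (fun _ => abs_nonneg _) (fun m => ?_) h1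
    have := hs.comp_injective (i := (Subtype.val : γ' ⁻¹' {m} → ι)) Subtype.val_injective
    exact norm_tsum_le_tsum_norm (f := fun i : γ' ⁻¹' {m} => c i) this
  have hdC : ∀ t : Set.Ici A, d t = ∑' m : M, C m * Real.exp (-(m.1) * (t.1 - A)) := by
    intro t
    rw [hd]
    have hsum : Summable fun i => c i * Real.exp (-(γ i) * (t.1 - A)) :=
      Summable.of_norm_bounded hs (fun i => tame_bound hM (hγ i) t.2)
    rw [← (HasSum.tsum_fiberwise hsum.hasSum γ').tsum_eq]
    refine tsum_congr fun m => ?_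
    rw [← tsum_mul_right]
    refine tsum_congr fun i => ?_
    have : γ i.1 = m.1 := congrArg Subtype.val i.2
    rw [this]
  by_cases hall : ∀ m, C m = 0
  · exfalso
    apply h0
    ext t
    simp [hdC, hall]
  push Not at hall
  obtain ⟨m1, hm1⟩ := hall
  let S : Set ℝ := {x | ∃ h : x ∈ M, C ⟨x, h⟩ ≠ 0}
  have hSW : S.IsWF := (hW.mono (fun x hx => hx.1)).isWF
  have hSne : S.Nonempty := ⟨m1.1, m1.2, hm1⟩
  obtain ⟨hgM, hg0⟩ := hSW.min_mem hSne
  set g := hSW.min hSne with hg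
  have hmin : ∀ m : M, m.1 < g → C m = 0 := by
    intro m hm
    by_contra hne
    exact hSW.not_lt_min hSne (a := m.1) ⟨m.2, hne⟩ hm
  have hlim : Filter.Tendsto (fun t : ℝ => ∑' m : M, C m * Real.exp (-(m.1 - g) * (t - A)))
      Filter.atTop (nhds (∑' m : M, if m = ⟨g, hgM⟩ then C m else 0)) := by
    refine tendsto_tsum_of_dominated_convergence (bound := fun m => |C m|) hCabs ?_ ?_
    · intro m
      rcases lt_trichotomy m.1 g with h | h | h
      · have hne : m ≠ ⟨g, hgM⟩ := by rintro rfl; exact lt_irrefl _ h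
        simp [hne, hmin m h]
      · have he : m = ⟨g, hgM⟩ := Subtype.ext h
        simp [he]
      · have hne : m ≠ ⟨g, hgM⟩ := by rintro rfl; exact lt_irrefl _ h
        simp only [hne, if_false]
        have : Filter.Tendsto (fun t : ℝ => Real.exp (-(m.1 - g) * (t - A))) Filter.atTop (nhds 0) := by
          apply Real.tendsto_exp_atBot.comp
          apply Filter.Tendsto.const_mul_atTop_of_neg (by linarith)
          exact Filter.tendsto_atTop_add_const_right _ _ Filter.tendsto_id
        simpa using this.const_mul (C m)
    · filter_upwards [Filter.eventually_ge_atTop A] with t ht m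
      rcases lt_or_ge m.1 g with h | h
      · simp [hmin m h]
      · rw [Real.norm_eq_abs, abs_mul, Real.abs_exp]
        refine mul_le_of_le_one_right (abs_nonneg _) (Real.exp_le_one_iff.2 ?_)
        nlinarith
  rw [tsum_ite_eq] at hlim
  have hev := hlim.eventually_ne hg0
  obtain ⟨A', hA'⟩ := Filter.eventually_atTop.1 hev
  refine ⟨A', fun t ht h => hA' t.1 ht ?_⟩
  have h2 : d t = 0 := h
  rw [hdC] at h2
  have : ∀ m : M, C m * Real.exp (-(m.1 - g) * (t.1 - A)) =
      (C m * Real.exp (-(m.1) * (t.1 - A))) * Real.exp (g * (t.1 - A)) := by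
    intro m
    rw [mul_assoc, ← Real.exp_add]; ring_nf
  simp_rw [this]
  rw [tsum_mul_right, h2, zero_mul]

lemma tame_noZeroDiv {M : AddSubmonoid ℝ} {hM : ∀ x ∈ M, 0 ≤ x} (hW : (M : Set ℝ).IsPWO) {A : ℝ} :
    IsDomain (tame M hM A) := by
  have : Nontrivial (tame M hM A) := ⟨0, 1, fun h => by
    have := congrFun (congrArg Subtype.val h) ⟨A, Set.mem_Ici.2 le_rfl⟩
    simp at this⟩
  have : NoZeroDivisors (tame M hM A) := ⟨by
    intro a b hab
    by_contra! hne
    obtain ⟨A1, h1⟩ := tame_eventually hW a hne.1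
    obtain ⟨A2, h2⟩ := tame_eventually hW b hne.2
    let t : Set.Ici A := ⟨max A (max A1 A2), Set.mem_Ici.2 (le_max_left _ _)⟩
    have h := congrFun (congrArg Subtype.val hab) t
    simp only [Subring.coe_mul, Pi.mul_apply, Subring.coe_zero, Pi.zero_apply, mul_eq_zero] at h
    rcases h with h | h
    · exact h1 t ((le_max_left _ _).trans (le_max_right _ _)) h
    · exact h2 t ((le_max_right _ _).trans (le_max_right _ _)) h⟩
  exact NoZeroDivisors.to_isDomain _

open Polynomial in
lemma poly_gcd_data {R : Type*} [CommRing R] [IsDomain R] (P Q : R[X]) (hP : P ≠ 0) :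
    ∃ (G P1 Q1 X Y : R[X]) (c r : R), c ≠ 0 ∧ r ≠ 0 ∧ C c * P = G * P1 ∧ C c * Q = G * Q1 ∧
      X * P1 + Y * Q1 = C r := by
  classical
  let K := FractionRing R
  have inj : Function.Injective (map (algebraMap R K)) :=
    map_injective _ (IsFractionRing.injective R K)
  have norm : ∀ p : K[X], ∃ (b : R) (p' : R[X]), b ≠ 0 ∧
      p'.map (algebraMap R K) = C (algebraMap R K b) * p := by
    intro p
    obtain ⟨b, hb1, hb2⟩ := IsLocalization.integerNormalization_spec (nonZeroDivisors R) p
    refine ⟨b, IsLocalization.integerNormalization (nonZeroDivisors R) p, nonZeroDivisors.ne_zero hb1, ?_⟩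
    rw [hb2, ← smul_eq_C_mul, algebraMap_smul]
  set p := P.map (algebraMap R K) with hp
  set q := Q.map (algebraMap R K) with hq
  have hp0 : p ≠ 0 := fun h => hP (inj (by simpa [hp] using h))
  obtain ⟨p1, hp1⟩ := EuclideanDomain.gcd_dvd_left p q
  obtain ⟨q1, hq1⟩ := EuclideanDomain.gcd_dvd_right p q
  have hbez := EuclideanDomain.gcd_eq_gcd_ab p q
  set g := EuclideanDomain.gcd p q with hg
  set x := EuclideanDomain.gcdA p q
  set y := EuclideanDomain.gcdB p q
  have hg0 : g ≠ 0 := fun h => hp0 (by rw [hp1, h, zero_mul])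
  have hb : x * p1 + y * q1 = 1 := by
    apply mul_left_cancel₀ hg0
    calc g * (x * p1 + y * q1) = (g * p1) * x + (g * q1) * y := by ring
      _ = g * 1 := by rw [← hp1, ← hq1, ← hbez, mul_one]
  obtain ⟨b0, G, hb0, hG⟩ := norm g
  obtain ⟨b1, P1, hb1, hP1⟩ := norm p1
  obtain ⟨b2, Q1, hb2, hQ1⟩ := norm q1
  obtain ⟨b3, X, hb3, hX⟩ := norm x
  obtain ⟨b4, Y, hb4, hY⟩ := norm y
  refine ⟨G, C b2 * P1, C b1 * Q1, C b4 * X, C b3 * Y, b0 * b1 * b2, b1 * b2 * b3 * b4,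
    by simp [*], by simp [*], ?_, ?_, ?_⟩
  · apply inj
    simp only [Polynomial.map_mul, map_C, hG, hP1, map_mul]
    rw [← hp, hp1]; ring
  · apply inj
    simp only [Polynomial.map_mul, map_C, hG, hQ1, map_mul]
    rw [← hq, hq1]; ring
  · apply inj
    simp only [Polynomial.map_mul, Polynomial.map_add, map_C, hX, hY, hP1, hQ1, map_mul]
    calc _ = C (algebraMap R K b1) * C (algebraMap R K b2) * C (algebraMap R K b3) * C (algebraMap R K b4) * (x * p1 + y * q1) := by ring
      _ = _ := by rw [hb, mul_one]

/-- evaluation of a tame polynomial -/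
def tev {M : AddSubmonoid ℝ} {hM : ∀ x ∈ M, 0 ≤ x} {A : ℝ} (t : Set.Ici A) :
    Polynomial (tame M hM A) →+* Polynomial ℝ :=
  Polynomial.mapRingHom ((Pi.evalRingHom (fun _ : Set.Ici A => ℝ) t).comp (tame M hM A).subtype)

lemma tev_continuous {M : AddSubmonoid ℝ} {hM : ∀ x ∈ M, 0 ≤ x} {A : ℝ}
    (W : Polynomial (tame M hM A)) :
    Continuous fun z : Set.Ici A × ℝ => (tev z.1 W).eval z.2 := by
  have : ∀ z : Set.Ici A × ℝ, (tev z.1 W).eval z.2 =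
      ∑ i ∈ W.support, (W.coeff i).1 z.1 * z.2 ^ i := by
    intro z
    rw [tev, Polynomial.coe_mapRingHom, Polynomial.eval_map, Polynomial.eval₂_eq_sum, Polynomial.sum]
    rfl
  simp_rw [this]
  refine continuous_finsetSum _ fun i _ => ?_
  have := tame_continuous (W.coeff i)
  fun_prop

/-- open bounded order-connected sets cut out by positivity conditions -/
lemma slice_endpoints {K : Type*} [Finite K] (w : K → ℝ → ℝ) (hw : ∀ k, Continuous (w k)) (δ : ℝ)
    (hb : {s | ∀ k, 0 < w k s} ⊆ Icc (-δ) δ) (ho : OrdConnected {s | ∀ k, 0 < w k s})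
    (hne : {s | ∀ k, 0 < w k s}.Nonempty) :
    ∃ a b, a < b ∧ a ∈ Icc (-δ) δ ∧ b ∈ Icc (-δ) δ ∧ Ioo a b ⊆ {s | ∀ k, 0 < w k s} ∧
      (∃ k, w k a = 0) ∧ (∃ k, w k b = 0) := by
  set C := {s | ∀ k, 0 < w k s} with hC
  have hopen : IsOpen C := by
    rw [hC, ofPred_forall]
    exact isOpen_iInter_of_finite fun k => isOpen_lt continuous_const (hw k)
  have hbb : BddBelow C := ⟨-δ, fun x hx => (hb hx).1⟩
  have hba : BddAbove C := ⟨δ, fun x hx => (hb hx).2⟩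
  have hclos : closure C ⊆ Icc (-δ) δ := closure_minimal hb isClosed_Icc
  have hca : sInf C ∈ closure C := csInf_mem_closure hne hbb
  have hcb : sSup C ∈ closure C := csSup_mem_closure hne hba
  have hna : sInf C ∉ C := fun h => by
    have := hopen.mem_nhds h
    obtain ⟨e, he, hsub⟩ := Metric.mem_nhds_iff.1 this
    have : sInf C - e / 2 ∈ C := hsub (by rw [Metric.mem_ball, Real.dist_eq]; rw [abs_lt]; constructor <;> linarith)
    have := csInf_le hbb this
    linarith
  have hnb : sSup C ∉ C := fun h => by
    have := hopen.mem_nhds h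
    obtain ⟨e, he, hsub⟩ := Metric.mem_nhds_iff.1 this
    have : sSup C + e / 2 ∈ C := hsub (by rw [Metric.mem_ball, Real.dist_eq]; rw [abs_lt]; constructor <;> linarith)
    have := le_csSup hba this
    linarith
  have hzero : ∀ x ∈ closure C, x ∉ C → ∃ k, w k x = 0 := by
    intro x hx hxn
    by_contra! hall
    apply hxn
    intro k
    have hge : x ∈ {s | 0 ≤ w k s} :=
      closure_minimal (fun s hs => (hs k).le) (isClosed_le continuous_const (hw k)) hx
    exact lt_of_le_of_ne hge (hall k).symm
  obtain ⟨s, hs⟩ := hne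
  refine ⟨sInf C, sSup C, ?_, hclos hca, hclos hcb, ?_, hzero _ hca hna, hzero _ hcb hnb⟩
  · have h1 := csInf_le hbb hs
    have h2 := le_csSup hba hs
    have h3 : sInf C ≠ s := fun h => hna (h ▸ hs)
    exact lt_of_lt_of_le (lt_of_le_of_ne h1 h3) h2
  · intro x hx
    obtain ⟨y, hy, hyx⟩ := (csInf_lt_iff hbb ⟨s, hs⟩).1 hx.1
    obtain ⟨z, hz, hxz⟩ := (lt_csSup_iff hba ⟨s, hs⟩).1 hx.2
    exact ho.out hy hz ⟨hyx.le, hxz.le⟩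

lemma no_gap {M : AddSubmonoid ℝ} {hM : ∀ x ∈ M, 0 ≤ x} (hPWO : (M : Set ℝ).IsPWO) {A : ℝ} (δ : ℝ)
    {K : Type} [Finite K] (W : K → Polynomial (tame M hM A))
    (hb : ∀ t, {s | ∀ k, 0 < (tev t (W k)).eval s} ⊆ Icc (-δ) δ)
    (ho : ∀ t, OrdConnected {s | ∀ k, 0 < (tev t (W k)).eval s})
    (hr : ∀ t, ∀ k, ∀ a b : ℝ, a < b → a ∈ Icc (-δ) δ → b ∈ Icc (-δ) δ →
      Ioo a b ⊆ {s | ∀ k, 0 < (tev t (W k)).eval s} →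
      ¬ ((tev t (W k)).eval a = 0 ∧ (tev t (W k)).eval b = 0))
    (h0 : ∀ t k, tev t (W k) ≠ 0) :
    ∃ A', (∀ t : Set.Ici A, A' < t.1 → ∃ s, ∀ k, 0 < (tev t (W k)).eval s) ∨
      (∀ t : Set.Ici A, A' < t.1 → ¬ ∃ s, ∀ k, 0 < (tev t (W k)).eval s) := by
  classical
  haveI := tame_noZeroDiv (hM := hM) hPWO (A := A)
  have hgcd : ∀ k k', ∃ B : ℝ, ∃ G P1 Q1 X Y : Polynomial (tame M hM A), ∃ c r : tame M hM A,
      Polynomial.C c * W k = G * P1 ∧ Polynomial.C c * W k' = G * Q1 ∧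
      X * P1 + Y * Q1 = Polynomial.C r ∧ ∀ t : Set.Ici A, B ≤ t.1 → c.1 t ≠ 0 ∧ r.1 t ≠ 0 := by
    intro k k'
    have hk : W k ≠ 0 := fun h => h0 ⟨A, Set.mem_Ici.2 le_rfl⟩ k (by rw [h, map_zero])
    obtain ⟨G, P1, Q1, X, Y, c, r, hc, hr, h1, h2, h3⟩ := poly_gcd_data (W k) (W k') hk
    obtain ⟨B1, hB1⟩ := tame_eventually hPWO c hc
    obtain ⟨B2, hB2⟩ := tame_eventually hPWO r hr
    exact ⟨max B1 B2, G, P1, Q1, X, Y, c, r, h1, h2, h3, fun t ht =>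
      ⟨hB1 t ((le_max_left _ _).trans ht), hB2 t ((le_max_right _ _).trans ht)⟩⟩
  choose B hB using hgcd
  obtain ⟨A1, hA1⟩ := (Set.finite_range (fun p : K × K => B p.1 p.2)).bddAbove
  let A' := max A A1
  have hcont : ∀ V : Polynomial (tame M hM A), Continuous fun z : Set.Ici A × ℝ => (tev z.1 V).eval z.2 :=
    tev_continuous
  have hcont1 : ∀ t (k : K), Continuous fun s => (tev t (W k)).eval s := fun t k =>
    Polynomial.continuous _
  let S : Set (Set.Ici A) := {t | ∃ s, ∀ k, 0 < (tev t (W k)).eval s}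
  have hSopen : IsOpen S := by
    have : S = Prod.fst '' {z : Set.Ici A × ℝ | ∀ k, 0 < (tev z.1 (W k)).eval z.2} := by
      ext t; simp [S]
    rw [this]
    refine isOpenMap_fst _ ?_
    rw [ofPred_forall]
    exact isOpen_iInter_of_finite fun k => isOpen_lt continuous_const (hcont _)
  have hSclosed : ∀ t : Set.Ici A, A' < t.1 → t ∈ closure S → t ∈ S := by
    intro t ht hcl
    haveI : (nhdsWithin t S).NeBot := mem_closure_iff_nhdsWithin_neBot.1 hcl
    obtain ⟨F, hF⟩ := Ultrafilter.exists_le (nhdsWithin t S)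
    have hFS : ∀ᶠ x in (F : Filter _), x ∈ S := hF self_mem_nhdsWithin
    have hFt : Filter.Tendsto (fun x : Set.Ici A => x) F (nhds t) := hF.trans nhdsWithin_le_nhds
    have hends : ∀ x : Set.Ici A, ∃ ab : ℝ × ℝ, x ∈ S → ab.1 < ab.2 ∧ ab.1 ∈ Icc (-δ) δ ∧
        ab.2 ∈ Icc (-δ) δ ∧
        Ioo ab.1 ab.2 ⊆ {s | ∀ k, 0 < (tev x (W k)).eval s} ∧
        (∃ k, (tev x (W k)).eval ab.1 = 0) ∧ (∃ k, (tev x (W k)).eval ab.2 = 0) := by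
      intro x
      by_cases hx : x ∈ S
      · obtain ⟨a, b, h⟩ := slice_endpoints (fun k s => (tev x (W k)).eval s) (hcont1 x) δ
          (hb x) (ho x) hx
        exact ⟨(a, b), fun _ => h⟩
      · exact ⟨(0, 0), fun h => absurd h hx⟩
    choose ab hab using hends
    have hlima : ∃ a, Filter.Tendsto (fun x => (ab x).1) F (nhds a) := by
      have h0 : ∀ᶠ x in (F : Filter (Set.Ici A)), (ab x).1 ∈ Icc (-δ) δ := by
        filter_upwards [hFS] with x hx using (hab x hx).2.1
      have : Icc (-δ) δ ∈ (F.map fun x => (ab x).1) := h0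
      obtain ⟨a, _, ha⟩ := isCompact_Icc.ultrafilter_le_nhds' _ this
      exact ⟨a, ha⟩
    have hlimb : ∃ a, Filter.Tendsto (fun x => (ab x).2) F (nhds a) := by
      have h0 : ∀ᶠ x in (F : Filter (Set.Ici A)), (ab x).2 ∈ Icc (-δ) δ := by
        filter_upwards [hFS] with x hx using (hab x hx).2.2.1
      have : Icc (-δ) δ ∈ (F.map fun x => (ab x).2) := h0
      obtain ⟨a, _, ha⟩ := isCompact_Icc.ultrafilter_le_nhds' _ this
      exact ⟨a, ha⟩
    obtain ⟨a, ha⟩ := hlima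
    obtain ⟨b, hb'⟩ := hlimb
    have hle : a ≤ b := le_of_tendsto_of_tendsto ha hb' (by
      filter_upwards [hFS] with x hx using (hab x hx).1.le)
    rcases hle.lt_or_eq with hlt | heq
    · -- nondegenerate limit interval
      have hfin : (⋃ k, {s | (tev t (W k)).IsRoot s}).Finite := by
        refine Set.finite_iUnion fun k => ?_
        exact Polynomial.finite_setOfPred_isRoot (h0 t k)
      obtain ⟨s, hs, hsn⟩ := ((Ioo_infinite hlt).sdiff hfin).nonempty
      refine ⟨s, fun k => ?_⟩
      have hge : 0 ≤ (tev t (W k)).eval s := by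
        have hT : Filter.Tendsto (fun x : Set.Ici A => (tev x (W k)).eval s) F
            (nhds ((tev t (W k)).eval s)) :=
          ((hcont (W k)).tendsto (t, s)).comp (hFt.prodMk_nhds tendsto_const_nhds)
        refine ge_of_tendsto hT ?_
        filter_upwards [hFS, ha.eventually_lt_const hs.1, hb'.eventually_const_lt hs.2] with x hx h1 h2
        exact ((hab x hx).2.2.2.1 ⟨h1, h2⟩ k).le
      refine lt_of_le_of_ne hge fun h => hsn ?_
      exact mem_iUnion.2 ⟨k, h.symm⟩
    · exfalso
      subst heq
      have hk1 : ∃ k, ∀ᶠ x in (F : Filter _), (tev x (W k)).eval (ab x).1 = 0 := by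
        rw [← Ultrafilter.eventually_exists_iff]
        filter_upwards [hFS] with x hx using (hab x hx).2.2.2.2.1
      have hk2 : ∃ k, ∀ᶠ x in (F : Filter _), (tev x (W k)).eval (ab x).2 = 0 := by
        rw [← Ultrafilter.eventually_exists_iff]
        filter_upwards [hFS] with x hx using (hab x hx).2.2.2.2.2
      obtain ⟨k, hk⟩ := hk1
      obtain ⟨k', hk'⟩ := hk2
      obtain ⟨G, P1, Q1, X, Y, c, r, e1, e2, e3, hne⟩ := hB k k'
      have hBA : B k k' ≤ A' := (hA1 ⟨(k, k'), rfl⟩).trans (le_max_right _ _)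
      have hbig : ∀ᶠ x : Set.Ici A in (F : Filter (Set.Ici A)), A' < x.1 := by
        have : Filter.Tendsto (fun x : Set.Ici A => x.1) F (nhds t.1) :=
          (continuous_subtype_val.tendsto t).comp hFt
        exact this.eventually_const_lt ht
      have ev : ∀ (x : Set.Ici A) (s : ℝ) (U V : Polynomial (tame M hM A)), U = V →
          (tev x U).eval s = (tev x V).eval s := by rintro x s U V rfl; rfl
      have tC : ∀ (x : Set.Ici A) (s : ℝ) (c : tame M hM A), (tev x (Polynomial.C c)).eval s = c.1 x := by
        intro x s c
        simp [tev]
      have main : ∀ᶠ x in (F : Filter _), (tev x P1).eval (ab x).1 = 0 ∧ (tev x Q1).eval (ab x).2 = 0 := by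
        filter_upwards [hFS, hk, hk', hbig] with x hx h1 h2 hxb
        obtain ⟨hlt, hma, hmb, hsub, -⟩ := hab x hx
        have hcne := (hne x (hBA.trans hxb.le)).1
        have h1' : (tev x (W k)).eval (ab x).2 ≠ 0 := fun h => hr x k _ _ hlt hma hmb hsub ⟨h1, h⟩
        have h2' : (tev x (W k')).eval (ab x).1 ≠ 0 := fun h => hr x k' _ _ hlt hma hmb hsub ⟨h, h2⟩
        have q1 := ev x (ab x).1 _ _ e1
        have q2 := ev x (ab x).1 _ _ e2
        have q3 := ev x (ab x).2 _ _ e1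
        have q4 := ev x (ab x).2 _ _ e2
        simp only [map_mul, Polynomial.eval_mul, tC] at q1 q2 q3 q4
        rw [h1, mul_zero] at q1
        rw [h2, mul_zero] at q4
        constructor
        · rcases mul_eq_zero.1 q1.symm with h | h
          · rw [h, zero_mul] at q2
            exact absurd q2 (mul_ne_zero hcne h2')
          · exact h
        · rcases mul_eq_zero.1 q4.symm with h | h
          · rw [h, zero_mul] at q3
            exact absurd q3 (mul_ne_zero hcne h1')
          · exact h
      have z1 : (tev t P1).eval a = 0 := by
        have hT : Filter.Tendsto (fun x : Set.Ici A => (tev x P1).eval (ab x).1) F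
            (nhds ((tev t P1).eval a)) :=
          ((hcont P1).tendsto (t, a)).comp (hFt.prodMk_nhds ha)
        refine tendsto_nhds_unique hT (tendsto_const_nhds.congr' ?_)
        filter_upwards [main] with x hx using hx.1.symm
      have z2 : (tev t Q1).eval a = 0 := by
        have hT : Filter.Tendsto (fun x : Set.Ici A => (tev x Q1).eval (ab x).2) F
            (nhds ((tev t Q1).eval a)) :=
          ((hcont Q1).tendsto (t, a)).comp (hFt.prodMk_nhds hb')
        refine tendsto_nhds_unique hT (tendsto_const_nhds.congr' ?_)
        filter_upwards [main] with x hx using hx.2.symm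
      have q5 := ev t a _ _ e3
      simp only [map_mul, map_add, Polynomial.eval_mul, Polynomial.eval_add, tC, z1, z2, mul_zero, add_zero] at q5
      exact (hne t (hBA.trans ht.le)).2 q5.symm
  refine ⟨A', ?_⟩
  -- connectedness of the ray
  have hconn : IsPreconnected {t : Set.Ici A | A' < t.1} := by
    have : {t : Set.Ici A | A' < t.1} = Ioi (⟨A', Set.mem_Ici.2 (le_max_left _ _)⟩ : Set.Ici A) := by
      ext t; simp [← Subtype.coe_lt_coe]
    rw [this]
    rw [← Topology.IsInducing.subtypeVal.isPreconnected_image]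
    have : Subtype.val '' Ioi (⟨A', Set.mem_Ici.2 (le_max_left _ _)⟩ : Set.Ici A) = Ioi A' := by
      ext x
      simp only [mem_image, mem_Ioi, Subtype.exists, ← Subtype.coe_lt_coe]
      constructor
      · rintro ⟨y, hy, h, rfl⟩; exact h
      · intro h; exact ⟨x, Set.mem_Ici.2 ((le_max_left A A1).trans (le_of_lt h)), h, rfl⟩
    rw [this]
    exact isPreconnected_Ioi
  by_cases hex : ∃ t : Set.Ici A, A' < t.1 ∧ t ∈ S
  · left
    intro t ht
    by_contra hno
    obtain ⟨t0, ht0, ht0S⟩ := hex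
    obtain ⟨x, hx, hx1, hx2⟩ := hconn S (closure S)ᶜ hSopen isClosed_closure.isOpen_compl
      (fun x hx => by
        by_cases h : x ∈ closure S
        · exact Or.inl (hSclosed x hx h)
        · exact Or.inr h) ⟨t0, ht0, ht0S⟩ ⟨t, ht, fun h => hno (hSclosed t ht h)⟩
    exact hx2 (subset_closure hx1)
  · right
    intro t ht h
    exact hex ⟨t, ht, h⟩

def wN {ι : Type} (n : ι → ℕ) (d : ℕ) : List ι → ℕ
  | [] => d
  | i :: w => wN n d w - d + n i

def wG {ι : Type} (γ : ι → ℝ) : List ι → ℝ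
  | [] => 0
  | i :: w => wG γ w + γ i

def wC {ι : Type} (q : ι → ℝ) (n : ι → ℕ) (d : ℕ) : List ι → ℝ
  | [] => 1
  | i :: w => if d ≤ wN n d w then -(q i) * wC q n d w else 0

def listE (ι : Type) : Unit ⊕ (ι × List ι) ≃ List ι where
  toFun := fun o => o.elim (fun _ => []) (fun p => p.1 :: p.2)
  invFun := fun w => match w with
    | [] => Sum.inl ()
    | i :: w => Sum.inr (i, w)
  left_inv := by rintro (_ | ⟨i, w⟩) <;> rfl
  right_inv := by rintro (_ | ⟨i, w⟩) <;> rfl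

lemma wC_finite_bound {ι : Type} (q : ι → ℝ) (n : ι → ℕ) (d : ℕ) (hq : Summable fun i => |q i|)
    (hS : ∑' i, |q i| ≤ 1 / 3) (N : ℕ) : ∀ F : Finset (List ι), (∀ w ∈ F, w.length ≤ N) →
      ∑ w ∈ F, |wC q n d w| ≤ 3 / 2 := by
  classical
  induction N with
  | zero =>
    intro F hF
    have : F ⊆ {[]} := fun w hw => by
      have := hF w hw
      simpa using this
    calc _ ≤ ∑ w ∈ {[]}, |wC q n d w| := Finset.sum_le_sum_of_subset_of_nonneg this (fun _ _ _ => abs_nonneg _)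
      _ ≤ _ := by simp [wC]; norm_num
  | succ N ih =>
    intro F hF
    let G1 : Finset ι := F.biUnion fun w => w.head?.toFinset
    let G2 : Finset (List ι) := F.image List.tail
    let G : Finset (List ι) := insert [] ((G1 ×ˢ G2).image fun p => p.1 :: p.2)
    have hsub : F ⊆ G := by
      intro w hw
      cases w with
      | nil => simp [G]
      | cons i w =>
        refine Finset.mem_insert_of_mem (Finset.mem_image.2 ⟨(i, w), Finset.mem_product.2 ⟨?_, ?_⟩, rfl⟩)
        · exact Finset.mem_biUnion.2 ⟨_, hw, by simp⟩
        · exact Finset.mem_image.2 ⟨_, hw, rfl⟩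
    have hG2 : ∑ w ∈ G2, |wC q n d w| ≤ 3 / 2 := by
      apply ih
      intro w hw
      obtain ⟨v, hv, rfl⟩ := Finset.mem_image.1 hw
      have := hF v hv
      simp; omega
    have hG1 : ∑ i ∈ G1, |q i| ≤ 1 / 3 := (hq.sum_le_tsum _ (fun _ _ => abs_nonneg _)).trans hS
    calc ∑ w ∈ F, |wC q n d w| ≤ ∑ w ∈ G, |wC q n d w| :=
          Finset.sum_le_sum_of_subset_of_nonneg hsub (fun _ _ _ => abs_nonneg _)
      _ = 1 + ∑ p ∈ G1 ×ˢ G2, |wC q n d (p.1 :: p.2)| := by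
          rw [Finset.sum_insert (by simp), Finset.sum_image]
          · simp [wC]
          · rintro ⟨i, w⟩ _ ⟨j, v⟩ _ h
            simpa using h
      _ ≤ 1 + ∑ p ∈ G1 ×ˢ G2, |q p.1| * |wC q n d p.2| := by
          gcongr with p hp
          rw [wC]
          split_ifs
          · rw [abs_mul, abs_neg]
          · rw [abs_zero]; positivity
      _ = 1 + (∑ i ∈ G1, |q i|) * ∑ w ∈ G2, |wC q n d w| := by
          rw [Finset.sum_mul_sum, Finset.sum_product]
      _ ≤ 1 + 1 / 3 * (3 / 2) := by
          gcongr
      _ = 3 / 2 := by norm_num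

lemma wC_summable {ι : Type} (q : ι → ℝ) (n : ι → ℕ) (d : ℕ) (hq : Summable fun i => |q i|)
    (hS : ∑' i, |q i| ≤ 1 / 3) :
    Summable (fun w => |wC q n d w|) ∧ ∑' w, |wC q n d w| ≤ 3 / 2 := by
  have hb : ∀ F : Finset (List ι), ∑ w ∈ F, |wC q n d w| ≤ 3 / 2 := fun F =>
    wC_finite_bound q n d hq hS (F.sup List.length) F (fun w hw => Finset.le_sup (f := List.length) hw)
  exact ⟨summable_of_sum_le (fun _ => abs_nonneg _) hb, Real.tsum_le_of_sum_le (fun _ => abs_nonneg _) hb⟩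

lemma wG_mem {ι : Type} {M : AddSubmonoid ℝ} (γ : ι → ℝ) (h : ∀ i, γ i ∈ M) (w : List ι) : wG γ w ∈ M := by
  induction w with
  | nil => exact M.zero_mem
  | cons i w ih => exact M.add_mem ih (h i)

lemma tsum_list {ι : Type} (f : List ι → ℝ) (hf : Summable f) :
    ∑' w, f w = f [] + ∑' p : ι × List ι, f (p.1 :: p.2) := by
  have hs := ((listE ι).summable_iff).2 hf
  rw [← (listE ι).tsum_eq f, Summable.tsum_sum (f := fun x => f (listE ι x))
    (hasSum_fintype _).summable (hs.comp_injective Sum.inr_injective)]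
  simp [listE]

lemma tame_const (M : AddSubmonoid ℝ) (hM : ∀ x ∈ M, 0 ≤ x) (A κ : ℝ) :
    (fun _ => κ : Set.Ici A → ℝ) ∈ tame M hM A :=
  ⟨Unit, fun _ => κ, fun _ => 0, fun _ => M.zero_mem, (hasSum_fintype _).summable, fun t => by simp⟩

/-- Weierstrass preparation. -/
lemma weier {M : AddSubmonoid ℝ} (hM : ∀ x ∈ M, 0 ≤ x) {ι : Type} (A δ c : ℝ) (hδ : 0 < δ) (hc : c ≠ 0)
    (d : ℕ) (p γ : ι → ℝ) (n : ι → ℕ) (hγ : ∀ i, γ i ∈ M)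
    (hs : Summable fun i => |p i| * Real.exp (-γ i * A) * δ ^ n i)
    (hS : ∑' i, |p i| * Real.exp (-γ i * A) * δ ^ n i ≤ |c| * δ ^ d / 3) :
    ∃ W : Polynomial (tame M hM A), (∀ t, tev t W ≠ 0) ∧
      ∀ (t : Set.Ici A) (s : ℝ), |s| ≤ δ → ∃ u > 0,
        (tev t W).eval s = u * (c * s ^ d + ∑' i, p i * Real.exp (-γ i * t) * s ^ n i) := by
  classical
  have hδd : 0 < δ ^ d := pow_pos hδ d
  have hcpos : 0 < |c| := abs_pos.2 hc
  let q : ι → ℝ := fun i => p i * Real.exp (-γ i * A) * δ ^ n i / (c * δ ^ d)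
  have hqabs : ∀ i, |q i| = |p i| * Real.exp (-γ i * A) * δ ^ n i / (|c| * δ ^ d) := by
    intro i
    simp only [q]
    rw [abs_div, abs_mul, abs_mul, abs_mul, Real.abs_exp, abs_of_pos hδd, abs_of_pos (pow_pos hδ _)]
  have hq : Summable fun i => |q i| := by
    simp_rw [hqabs]; exact hs.div_const _
  have hqS : ∑' i, |q i| ≤ 1 / 3 := by
    simp_rw [hqabs]; rw [tsum_div_const, div_le_iff₀ (by positivity)]
    linarith
  obtain ⟨hC, hCS⟩ := wC_summable q n d hq hqS
  set Cw := wC q n d with hCw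
  set Nw := wN n d with hNw
  set Gw := wG γ with hGw
  have hG : ∀ w, Gw w ∈ M := wG_mem γ hγ
  -- the coefficients
  let hcf : ℕ → tame M hM A := fun k =>
    ⟨fun t => ∑' w : List ι, (if Nw w = k then Cw w else 0) * Real.exp (-(Gw w) * (t.1 - A)),
      List ι, fun w => if Nw w = k then Cw w else 0, Gw, hG, by
        refine Summable.of_nonneg_of_le (fun _ => abs_nonneg _) (fun w => ?_) hC
        dsimp only
        split_ifs <;> simp, fun t => rfl⟩
  let con : ℝ → tame M hM A := fun κ => ⟨_, tame_const M hM A κ⟩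
  let W : Polynomial (tame M hM A) := Polynomial.C (con (c / δ ^ d)) * Polynomial.X ^ d -
    ∑ k ∈ Finset.range d, Polynomial.C (con (c / δ ^ k) * hcf k) * Polynomial.X ^ k
  have hWt : ∀ t, tev t W = Polynomial.C (c / δ ^ d) * Polynomial.X ^ d -
    ∑ k ∈ Finset.range d, Polynomial.C ((c / δ ^ k) * (hcf k).1 t) * Polynomial.X ^ k := by
    intro t
    simp only [W, tev, map_sub, map_mul, map_pow, map_sum, Polynomial.coe_mapRingHom,
      Polynomial.map_C, Polynomial.map_X]
    rfl
  refine ⟨W, fun t h => ?_, fun t s hs => ?_⟩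
  · have := congrArg (fun P => Polynomial.coeff P d) h
    rw [hWt] at this
    simp only [Polynomial.coeff_sub, Polynomial.finsetSum_coeff, Polynomial.coeff_C_mul_X_pow,
      Polynomial.coeff_zero, if_true] at this
    rw [Finset.sum_eq_zero] at this
    · rw [sub_zero] at this
      exact (div_ne_zero hc hδd.ne') this
    · intro k hk
      rw [if_neg (Finset.mem_range.1 hk).ne']
  have htA : A ≤ t.1 := t.2
  have hσ : |s / δ| ≤ 1 := by rw [abs_div, abs_of_pos hδ]; exact div_le_one_of_le₀ hs hδ.le
  set σ := s / δ with hσd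
  have hsσ : s = σ * δ := by rw [hσd]; field_simp
  let E : List ι → ℝ := fun w => Real.exp (-(Gw w) * (t.1 - A))
  have hE : ∀ w, |E w| ≤ 1 := by
    intro w
    rw [Real.abs_exp]
    refine Real.exp_le_one_iff.2 ?_
    have := hM _ (hG w)
    nlinarith
  have hσk : ∀ k : ℕ, |σ ^ k| ≤ 1 := fun k => by rw [abs_pow]; exact pow_le_one₀ (abs_nonneg _) hσ
  have sumb : ∀ (f : List ι → ℝ), (∀ w, |f w| ≤ 1) → Summable fun w => Cw w * f w := by
    intro f hf
    refine Summable.of_norm_bounded hC (fun w => ?_)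
    rw [Real.norm_eq_abs, abs_mul]
    exact mul_le_of_le_one_right (abs_nonneg _) (hf w)
  have hmul1 : ∀ x y : ℝ, |x| ≤ 1 → |y| ≤ 1 → |x * y| ≤ 1 := fun x y hx hy => by
    rw [abs_mul]; exact mul_le_one₀ hx (abs_nonneg _) hy
  let F : ℝ := ∑' w, Cw w * (E w * σ ^ Nw w)
  let fT : List ι → ℝ := fun w => if d ≤ Nw w then E w * σ ^ (Nw w - d) else 0
  let fH : List ι → ℝ := fun w => if d ≤ Nw w then 0 else E w * σ ^ (Nw w)
  have hfT : ∀ w, |fT w| ≤ 1 := fun w => by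
    simp only [fT]; split_ifs
    · exact hmul1 _ _ (hE w) (hσk _)
    · simp
  have hfH : ∀ w, |fH w| ≤ 1 := fun w => by
    simp only [fH]; split_ifs
    · simp
    · exact hmul1 _ _ (hE w) (hσk _)
  let T : ℝ := ∑' w, Cw w * fT w
  let H : ℝ := ∑' w, Cw w * fH w
  have hF1 : F = H + σ ^ d * T := by
    simp only [F, H, T]
    rw [← tsum_mul_left, ← Summable.tsum_add (sumb _ hfH) ((sumb _ hfT).mul_left _)]
    refine tsum_congr fun w => ?_
    simp only [fT, fH]
    split_ifs with h
    · have : σ ^ Nw w = σ ^ d * σ ^ (Nw w - d) := by rw [← pow_add]; congr 1; omega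
      rw [this]; ring
    · ring
  let qe : ι → ℝ := fun i => q i * Real.exp (-(γ i) * (t.1 - A)) * σ ^ n i
  have hqe : Summable fun i => ‖qe i‖ := by
    refine Summable.of_nonneg_of_le (fun _ => norm_nonneg _) (fun i => ?_) hq
    simp only [qe]
    rw [Real.norm_eq_abs, abs_mul, abs_mul, Real.abs_exp, mul_assoc]
    refine mul_le_of_le_one_right (abs_nonneg _) ?_
    refine mul_le_one₀ (Real.exp_le_one_iff.2 ?_) (abs_nonneg _) (hσk _)
    have := hM _ (hγ i)
    nlinarith
  have hF2 : F = σ ^ d - (∑' i, qe i) * T := by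
    simp only [F, T]
    rw [tsum_list _ (sumb _ fun w => hmul1 _ _ (hE w) (hσk _))]
    have : Summable fun w => ‖Cw w * fT w‖ := (sumb _ hfT).norm
    rw [tsum_mul_tsum_of_summable_norm hqe this, sub_eq_add_neg, ← tsum_neg]
    congr 1
    · simp [hCw, hNw, E, hGw, wC, wN, wG]
    · refine tsum_congr fun p => ?_
      have h1 : Cw (p.1 :: p.2) = if d ≤ Nw p.2 then -(q p.1) * Cw p.2 else 0 := rfl
      have h2 : Nw (p.1 :: p.2) = Nw p.2 - d + n p.1 := rfl
      have h3 : E (p.1 :: p.2) = E p.2 * Real.exp (-(γ p.1) * (t.1 - A)) := by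
        simp only [E]; rw [← Real.exp_add]; congr 1
        have : Gw (p.1 :: p.2) = Gw p.2 + γ p.1 := rfl
        rw [this]; ring
      rw [h1, h2, h3]
      simp only [fT, qe]
      split_ifs with h
      · rw [pow_add]; ring
      · ring
  have hT : |T - 1| ≤ 1 / 2 := by
    have e1 : ∑' w, |Cw w| = 1 + ∑' p : ι × List ι, |Cw (p.1 :: p.2)| := by
      rw [tsum_list _ hC]; simp [hCw, wC]
    have e2 : T = 1 + ∑' p : ι × List ι, Cw (p.1 :: p.2) * fT (p.1 :: p.2) := by
      simp only [T]
      rw [tsum_list _ (sumb _ hfT)]; simp [hCw, wC, fT, hNw, wN, E, hGw, wG]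
    have hsm : Summable fun p : ι × List ι => |Cw (p.1 :: p.2)| :=
      hC.comp_injective (i := fun p : ι × List ι => p.1 :: p.2) (by
        rintro ⟨i, w⟩ ⟨j, v⟩ h; simpa using h)
    rw [e2, add_sub_cancel_left]
    have : |∑' p : ι × List ι, Cw (p.1 :: p.2) * fT (p.1 :: p.2)| ≤ ∑' p : ι × List ι, |Cw (p.1 :: p.2)| := by
      rw [← Real.norm_eq_abs]
      refine tsum_of_norm_bounded hsm.hasSum fun p => ?_
      rw [Real.norm_eq_abs, abs_mul]
      exact mul_le_of_le_one_right (abs_nonneg _) (hfT _)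
    linarith
  have hTpos : 0 < T := by rw [abs_le] at hT; linarith
  have hHpoly : H = ∑ k ∈ Finset.range d, (hcf k).1 t * σ ^ k := by
    have hk : ∀ k, Summable fun w => (Cw w) * ((if Nw w = k then 1 else 0) * E w * σ ^ k) := fun k =>
      sumb _ fun w => hmul1 _ _ (hmul1 _ _ (by split_ifs <;> simp) (hE w)) (hσk _)
    have : ∀ k, (hcf k).1 t * σ ^ k = ∑' w, (Cw w) * ((if Nw w = k then 1 else 0) * E w * σ ^ k) := by
      intro k
      simp only [hcf]
      rw [← tsum_mul_right]
      refine tsum_congr fun w => ?_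
      split_ifs <;> simp [E] <;> ring
    simp_rw [this]
    rw [← Summable.tsum_finsetSum (fun k _ => hk k)]
    refine tsum_congr fun w => ?_
    rw [← Finset.mul_sum]
    congr 1
    simp only [fH]
    split_ifs with h
    · rw [Finset.sum_eq_zero]
      intro k hk
      have := Finset.mem_range.1 hk
      rw [if_neg (by omega)]; simp
    · rw [Finset.sum_eq_single (Nw w)]
      · simp
      · intro k _ hk; rw [if_neg hk.symm]; simp
      · intro h'; exact absurd (Finset.mem_range.2 (by omega)) h'
  refine ⟨T / δ ^ d, by positivity, ?_⟩
  have hW1 : (tev t W).eval s = c * (σ ^ d - H) := by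
    rw [hWt, hHpoly]
    simp only [Polynomial.eval_sub, Polynomial.eval_mul, Polynomial.eval_C, Polynomial.eval_pow,
      Polynomial.eval_X, Polynomial.eval_finsetSum]
    rw [mul_sub, Finset.mul_sum]
    congr 1
    · rw [hσd, div_pow]; ring
    · refine Finset.sum_congr rfl fun k _ => ?_
      rw [hσd, div_pow]; ring
  have hP : c * s ^ d + ∑' i, p i * Real.exp (-γ i * t) * s ^ n i = c * δ ^ d * (σ ^ d + ∑' i, qe i) := by
    rw [mul_add, ← tsum_mul_left]
    congr 1
    · rw [hsσ, mul_pow]; ring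
    · refine tsum_congr fun i => ?_
      simp only [qe, q]
      have : Real.exp (-γ i * t.1) = Real.exp (-γ i * A) * Real.exp (-(γ i) * (t.1 - A)) := by
        rw [← Real.exp_add]; congr 1; ring
      rw [this, hsσ, mul_pow]
      field_simp
  rw [hW1, hP]
  have : σ ^ d - H = (σ ^ d + ∑' i, qe i) * T := by
    have := hF1.symm.trans hF2
    linear_combination (-1 : ℝ) * this
  rw [this]
  field_simp

lemma exp_series (x : ℝ) : Summable (fun n : ℕ => ‖x ^ n / (n.factorial : ℝ)‖) ∧
    ∑' n : ℕ, x ^ n / (n.factorial : ℝ) = Real.exp x := by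
  refine ⟨(Real.summable_pow_div_factorial x).norm, ?_⟩
  rw [Real.exp_eq_exp_ℝ, NormedSpace.exp_eq_tsum_div]

set_option maxHeartbeats 2000000 in
lemma prep {M : AddSubmonoid ℝ} (hM : ∀ x ∈ M, 0 ≤ x) (Γ : Set ℝ) (hΓ : Γ.IsWF)
    (hdiff : ∀ x ∈ Γ, ∀ y ∈ Γ, y ≤ x → x - y ∈ M) (F : Finset ℝ) (C : ℝ → ℝ → ℝ) (A0 : ℝ)
    (hsum : ∀ k ∈ F, Summable fun γ : Γ => |C γ k| * Real.exp (-γ.1 * A0))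
    (hne : ∃ k ∈ F, ∃ γ ∈ Γ, C γ k ≠ 0) :
    ∀ᶠ δ in nhdsWithin (0 : ℝ) (Ioi 0), ∀ᶠ A in Filter.atTop, ∃ W : Polynomial (tame M hM A),
      (∀ t, tev t W ≠ 0) ∧ ∀ (t : Set.Ici A) (s : ℝ), |s| ≤ δ → ∃ u > 0, (tev t W).eval s =
        u * ∑ k ∈ F, (∑' γ : Γ, C γ k * Real.exp (-γ.1 * t)) * Real.exp (k * s) := by
  classical
  let S : Set ℝ := {γ | γ ∈ Γ ∧ ∃ k ∈ F, C γ k ≠ 0}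
  have hSW : S.IsWF := hΓ.mono (fun x hx => hx.1)
  have hSne : S.Nonempty := by
    obtain ⟨k, hk, γ, hγ, h⟩ := hne
    exact ⟨γ, hγ, k, hk, h⟩
  obtain ⟨hg0, k0, hk0, hC0⟩ := hSW.min_mem hSne
  set g0 := hSW.min hSne with hg0d
  have hmin : ∀ γ ∈ Γ, γ < g0 → ∀ k ∈ F, C γ k = 0 := by
    intro γ hγ hlt k hk
    by_contra h
    exact hSW.not_lt_min hSne (a := γ) ⟨hγ, k, hk, h⟩ hlt
  let b : ℝ → ℕ → ℝ := fun γ n => ∑ k ∈ F, C γ k * (k ^ n / (n.factorial : ℝ))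
  have hbmin : ∀ γ ∈ Γ, γ < g0 → ∀ n, b γ n = 0 := by
    intro γ hγ hlt n
    exact Finset.sum_eq_zero fun k hk => by rw [hmin γ hγ hlt k hk, zero_mul]
  have hbex : ∃ n, b g0 n ≠ 0 := by
    by_contra! hall
    let e := F.equivFin.symm
    have hv := Matrix.eq_zero_of_forall_pow_sum_mul_pow_eq_zero (R := ℝ) (n := F.card)
      (f := fun i => (e i).1) (v := fun i => C g0 (e i).1)
      (fun i j h => e.injective (Subtype.ext h)) (by
        intro i
        have h1 := hall i
        have h2 : ∑ k ∈ F, C g0 k * k ^ (i : ℕ) = 0 := by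
          have : b g0 i = (∑ k ∈ F, C g0 k * k ^ (i : ℕ)) / ((i : ℕ).factorial : ℝ) := by
            simp only [b]; rw [Finset.sum_div]
            exact Finset.sum_congr rfl fun k _ => by ring
          rw [this, div_eq_zero_iff] at h1
          rcases h1 with h1 | h1
          · exact h1
          · exact absurd h1 (by positivity)
        rw [← h2, ← Finset.sum_coe_sort F]
        exact e.sum_comp (fun k : F => C g0 k * k.1 ^ (i : ℕ)))
    have := congrFun hv (e.symm ⟨k0, hk0⟩)
    simp at this
    exact hC0 this
  let d := Nat.find hbex
  have hbd : b g0 d ≠ 0 := Nat.find_spec hbex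
  have hblt : ∀ n < d, b g0 n = 0 := fun n hn => by
    have := Nat.find_min hbex hn
    simpa using this
  set c := b g0 d with hc
  let ι := Γ × ℕ
  let i0 : ι := (⟨g0, hg0⟩, d)
  let p : ι → ℝ := fun i => if i = i0 then 0 else b i.1.1 i.2
  let γ' : ι → ℝ := fun i => max (i.1.1 - g0) 0
  let n : ι → ℕ := fun i => i.2
  have hγ' : ∀ i, γ' i ∈ M := by
    intro i
    simp only [γ']
    rcases le_total g0 i.1.1 with h | h
    · rw [max_eq_left (by linarith)]
      exact hdiff _ i.1.2 _ hg0 h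
    · rw [max_eq_right (by linarith)]; exact M.zero_mem
  have hγpos : ∀ i, 0 ≤ γ' i := fun i => le_max_right _ _
  -- for nonzero b, exponents
  have hexp : ∀ (i : ι) (t : ℝ), b i.1.1 i.2 * Real.exp (-γ' i * t) =
      Real.exp (g0 * t) * (b i.1.1 i.2 * Real.exp (-i.1.1 * t)) := by
    intro i t
    rcases lt_or_ge i.1.1 g0 with h | h
    · rw [hbmin _ i.1.2 h]; ring
    · have : -γ' i * t = g0 * t + -i.1.1 * t := by
        simp only [γ']; rw [max_eq_left (by linarith)]; ring
      rw [this, Real.exp_add]; ring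
  -- summability
  have hprod : ∀ k ∈ F, Summable fun i : ι => (|C i.1.1 k| * Real.exp (-i.1.1 * A0)) * ‖k ^ i.2 / (i.2.factorial : ℝ)‖ :=
    fun k hk => Summable.mul_of_nonneg (hsum k hk) (exp_series k).1 (fun γ => by positivity)
      (fun _ => norm_nonneg _)
  have hbs : Summable fun i : ι => |b i.1.1 i.2| * Real.exp (-i.1.1 * A0) := by
    refine Summable.of_nonneg_of_le (fun _ => by positivity) (fun i => ?_) (summable_sum hprod)
    have : |b i.1.1 i.2| ≤ ∑ k ∈ F, |C i.1.1 k| * ‖k ^ i.2 / (i.2.factorial : ℝ)‖ := by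
      refine (Finset.abs_sum_le_sum_abs _ _).trans (Finset.sum_le_sum fun k _ => ?_)
      rw [abs_mul, Real.norm_eq_abs]
    calc |b i.1.1 i.2| * Real.exp (-i.1.1 * A0)
        ≤ (∑ k ∈ F, |C i.1.1 k| * ‖k ^ i.2 / (i.2.factorial : ℝ)‖) * Real.exp (-i.1.1 * A0) := by gcongr
      _ = _ := by rw [Finset.sum_mul]; exact Finset.sum_congr rfl fun k _ => by ring
  have hpb : ∀ i, |p i| ≤ |b i.1.1 i.2| := by
    intro i; simp only [p]; split_ifs <;> simp
  have hbs' : Summable fun i : ι => |b i.1.1 i.2| * Real.exp (-γ' i * A0) := by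
    have : (fun i : ι => |b i.1.1 i.2| * Real.exp (-γ' i * A0)) =
        fun i => Real.exp (g0 * A0) * (|b i.1.1 i.2| * Real.exp (-i.1.1 * A0)) := by
      funext i
      have := congrArg abs (hexp i A0)
      rw [abs_mul, abs_mul, abs_mul, Real.abs_exp, Real.abs_exp, Real.abs_exp] at this
      exact this
    rw [this]; exact hbs.mul_left _
  have hps : Summable fun i : ι => |p i| * Real.exp (-γ' i * A0) :=
    Summable.of_nonneg_of_le (fun _ => by positivity) (fun i => mul_le_mul_of_nonneg_right (hpb i) (Real.exp_pos _).le) hbs'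
  set Sg := ∑' i : ι, |p i| * Real.exp (-γ' i * A0) with hSg
  have hSg0 : 0 ≤ Sg := tsum_nonneg fun i => by positivity
  have hcpos : 0 < |c| := abs_pos.2 hbd
  have hδev : ∀ᶠ δ in nhdsWithin (0 : ℝ) (Ioi 0), 0 < δ ∧ δ ≤ 1 ∧ δ * Sg < |c| / 3 := by
    have h1 : ∀ᶠ δ in nhds (0 : ℝ), δ < 1 := Iio_mem_nhds one_pos
    have h2 : ∀ᶠ δ in nhds (0 : ℝ), δ * Sg < |c| / 3 := by
      have : Filter.Tendsto (fun δ : ℝ => δ * Sg) (nhds 0) (nhds (0 * Sg)) :=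
        (continuous_id.mul continuous_const).tendsto 0
      rw [zero_mul] at this
      exact this.eventually_lt_const (by positivity)
    filter_upwards [self_mem_nhdsWithin, nhdsWithin_le_nhds h1, nhdsWithin_le_nhds h2] with δ a b c
    exact ⟨a, le_of_lt b, c⟩
  filter_upwards [hδev] with δ hδ
  obtain ⟨hδ0, hδ1, hδ2⟩ := hδ
  have hbound : ∀ A, A0 ≤ A → ∀ i, |p i| * Real.exp (-γ' i * A) * δ ^ n i ≤ |p i| * Real.exp (-γ' i * A0) := by
    intro A hA i
    have h1 : δ ^ n i ≤ 1 := pow_le_one₀ hδ0.le hδ1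
    have h2 : Real.exp (-γ' i * A) ≤ Real.exp (-γ' i * A0) := by
      apply Real.exp_le_exp.2
      have := hγpos i
      nlinarith
    calc _ ≤ |p i| * Real.exp (-γ' i * A0) * 1 := by gcongr
      _ = _ := mul_one _
  have hsumA : ∀ A, A0 ≤ A → Summable fun i => |p i| * Real.exp (-γ' i * A) * δ ^ n i := fun A hA =>
    Summable.of_nonneg_of_le (fun _ => by positivity) (hbound A hA) hps
  have hlim : Filter.Tendsto (fun A => ∑' i, |p i| * Real.exp (-γ' i * A) * δ ^ n i) Filter.atTop
      (nhds (∑' i, if γ' i = 0 then |p i| * δ ^ n i else 0)) := by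
    refine tendsto_tsum_of_dominated_convergence (bound := fun i => |p i| * Real.exp (-γ' i * A0)) hps ?_ ?_
    · intro i
      split_ifs with h
      · simp [h]
      · have : Filter.Tendsto (fun t : ℝ => Real.exp (-γ' i * t)) Filter.atTop (nhds 0) := by
          apply Real.tendsto_exp_atBot.comp
          apply Filter.Tendsto.const_mul_atTop_of_neg _ Filter.tendsto_id
          have := lt_of_le_of_ne (hγpos i) (Ne.symm h)
          linarith
        have := (this.const_mul (|p i|)).mul_const (δ ^ n i)
        simpa using this
    · filter_upwards [Filter.eventually_ge_atTop A0] with A hA i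
      rw [Real.norm_eq_abs, abs_of_nonneg (by positivity)]
      exact hbound A hA i
  have hlimval : ∑' i, (if γ' i = 0 then |p i| * δ ^ n i else 0) < |c| * δ ^ d / 3 := by
    have hterm : ∀ i, (if γ' i = 0 then |p i| * δ ^ n i else 0) ≤ δ ^ (d + 1) * (|p i| * Real.exp (-γ' i * A0)) := by
      intro i
      split_ifs with h
      · rw [h]; simp only [neg_zero, zero_mul, Real.exp_zero, mul_one]
        by_cases hp0 : p i = 0
        · simp [hp0]
        · have hnd : d + 1 ≤ n i := by
            have hb0 : b i.1.1 i.2 ≠ 0 := by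
              intro hh; apply hp0; simp only [p]; split_ifs <;> simp [hh]
            have hgi : i.1.1 = g0 := by
              apply le_antisymm
              · have : i.1.1 - g0 ≤ γ' i := le_max_left _ _
                linarith
              · by_contra hlt
                exact hb0 (hbmin _ i.1.2 (not_le.1 hlt) _)
            have hni : i.2 ≠ d := by
              intro hh
              apply hp0
              have : i = i0 := Prod.ext (Subtype.ext hgi) hh
              simp [p, this]
            have hnl : ¬ i.2 < d := fun hh => hb0 (by rw [hgi]; exact hblt _ hh)
            change d + 1 ≤ i.2
            omega
          rw [mul_comm]
          gcongr ?_ * _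
          exact pow_le_pow_of_le_one hδ0.le hδ1 hnd
      · positivity
    have hs1 : Summable fun i => (if γ' i = 0 then |p i| * δ ^ n i else 0) :=
      Summable.of_nonneg_of_le (fun i => by split_ifs <;> positivity) hterm (hps.mul_left _)
    calc _ ≤ ∑' i, δ ^ (d + 1) * (|p i| * Real.exp (-γ' i * A0)) := hs1.tsum_le_tsum hterm (hps.mul_left _)
      _ = δ ^ d * (δ * Sg) := by rw [tsum_mul_left, pow_succ]; ring
      _ < δ ^ d * (|c| / 3) := by gcongr
      _ = _ := by ring
  filter_upwards [hlim.eventually_lt_const hlimval, Filter.eventually_ge_atTop A0] with A hA1 hA0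
  obtain ⟨W, hW1, hW2⟩ := weier hM A δ c hδ0 hbd d p γ' n hγ' (hsumA A hA0) hA1.le
  refine ⟨W, hW1, fun t s hs => ?_⟩
  obtain ⟨u, hu, hWe⟩ := hW2 t s hs
  have htA : A0 ≤ t.1 := hA0.trans t.2
  refine ⟨u * Real.exp (g0 * t), by positivity, ?_⟩
  rw [hWe, mul_assoc]
  congr 1
  have hs1 : |s| ≤ 1 := hs.trans hδ1
  have hCt : ∀ k ∈ F, Summable fun γ : Γ => ‖C γ k * Real.exp (-γ.1 * t.1)‖ := by
    intro k hk
    -- compare with A0 via the minimal exponent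
    have : Summable fun γ : Γ => Real.exp (-g0 * (t.1 - A0)) * (|C γ k| * Real.exp (-γ.1 * A0)) := (hsum k hk).mul_left _
    refine Summable.of_nonneg_of_le (fun _ => norm_nonneg _) (fun γ => ?_) this
    rw [Real.norm_eq_abs, abs_mul, Real.abs_exp]
    rcases lt_or_ge γ.1 g0 with h | h
    · rw [hmin _ γ.2 h k hk]; simp
    · rw [mul_left_comm, ← Real.exp_add]
      gcongr
      nlinarith
  have hdouble : ∀ k ∈ F, Summable fun i : ι => (C i.1 k * Real.exp (-i.1.1 * t.1)) * ((k * s) ^ i.2 / (i.2.factorial : ℝ)) :=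
    fun k hk => summable_mul_of_summable_norm (hCt k hk) (exp_series (k * s)).1
  have hR : ∑ k ∈ F, (∑' γ : Γ, C γ k * Real.exp (-γ.1 * t)) * Real.exp (k * s) =
      ∑' i : ι, b i.1.1 i.2 * Real.exp (-i.1.1 * t) * s ^ i.2 := by
    have : ∀ i : ι, b i.1.1 i.2 * Real.exp (-i.1.1 * t) * s ^ i.2 =
        ∑ k ∈ F, (C i.1 k * Real.exp (-i.1.1 * t.1)) * ((k * s) ^ i.2 / (i.2.factorial : ℝ)) := by
      intro i
      simp only [b]; rw [Finset.sum_mul, Finset.sum_mul]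
      refine Finset.sum_congr rfl fun k _ => ?_
      rw [mul_pow]; ring
    simp_rw [this]
    rw [Summable.tsum_finsetSum hdouble]
    refine Finset.sum_congr rfl fun k hk => ?_
    rw [← (exp_series (k * s)).2]
    exact tsum_mul_tsum_of_summable_norm (hCt k hk) (exp_series (k * s)).1
  have hbt : Summable fun i : ι => b i.1.1 i.2 * Real.exp (-γ' i * t) * s ^ n i := by
    refine Summable.of_norm_bounded hbs' fun i => ?_
    rw [Real.norm_eq_abs, abs_mul, abs_mul, Real.abs_exp, abs_pow]
    have h1 : |s| ^ n i ≤ 1 := pow_le_one₀ (abs_nonneg _) hs1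
    have h2 : Real.exp (-γ' i * t) ≤ Real.exp (-γ' i * A0) := by
      apply Real.exp_le_exp.2
      have := hγpos i
      nlinarith
    calc _ ≤ |b i.1.1 i.2| * Real.exp (-γ' i * A0) * 1 := by gcongr
      _ = _ := mul_one _
  rw [hR, ← tsum_mul_left]
  have hsplit : ∀ i : ι, Real.exp (g0 * t) * (b i.1.1 i.2 * Real.exp (-i.1.1 * t) * s ^ i.2) =
      (if i = i0 then c * s ^ d else 0) + p i * Real.exp (-γ' i * t) * s ^ n i := by
    intro i
    rw [← mul_assoc, ← hexp]
    by_cases h : i = i0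
    · have hγ0 : γ' i = 0 := by rw [h]; simp [γ', i0]
      simp only [p, h, if_true, zero_mul, add_zero]
      rw [← h, hγ0, h]
      simp [i0, hc]
    · simp only [p, h, if_false, zero_add]; rfl
  simp_rw [hsplit]
  rw [Summable.tsum_add]
  · rw [tsum_ite_eq]
  · exact (hasSum_ite_eq i0 _).summable
  · refine Summable.of_norm_bounded hps fun i => ?_
    rw [Real.norm_eq_abs, abs_mul, abs_mul, Real.abs_exp, abs_pow]
    have h1 : |s| ^ n i ≤ 1 := pow_le_one₀ (abs_nonneg _) hs1
    have h2 : Real.exp (-γ' i * t) ≤ Real.exp (-γ' i * A0) := by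
      apply Real.exp_le_exp.2
      have := hγpos i
      nlinarith
    calc _ ≤ |p i| * Real.exp (-γ' i * A0) * 1 := by gcongr
      _ = _ := mul_one _

/-- derived family -/
def EG (F : Finset ℝ) (a : ℝ → ℝ) (G : Finset ℝ) (s : ℝ) : ℝ :=
  ∑ k ∈ F, (∏ α ∈ F \ G, (k - α)) * a k * Real.exp (k * s)

lemma EG_empty (F : Finset ℝ) (a : ℝ → ℝ) (s : ℝ) : EG F a ∅ s = 0 := by
  refine Finset.sum_eq_zero fun k hk => ?_
  rw [Finset.prod_eq_zero (i := k) (by simpa using hk) (by simp)]; ring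

lemma EG_full (F : Finset ℝ) (a : ℝ → ℝ) (s : ℝ) : EG F a F s = ∑ k ∈ F, a k * Real.exp (k * s) := by
  simp [EG]

lemma EG_prod (F G : Finset ℝ) (hG : G ⊆ F) (α : ℝ) (hα : α ∈ G) (k : ℝ) :
    ∏ β ∈ F \ (G.erase α), (k - β) = (k - α) * ∏ β ∈ F \ G, (k - β) := by
  have : F \ (G.erase α) = insert α (F \ G) := by
    ext x; simp only [Finset.mem_sdiff, Finset.mem_erase, Finset.mem_insert]
    by_cases hx : x = α
    · subst hx; simp [hG hα]
    · simp [hx]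
  rw [this, Finset.prod_insert (by simp [hα])]

lemma EG_diff (F : Finset ℝ) (a : ℝ → ℝ) (G : Finset ℝ) (hG : G ⊆ F) (α α' : ℝ) (hα : α ∈ G) (hα' : α' ∈ G)
    (s : ℝ) : EG F a (G.erase α) s - EG F a (G.erase α') s = (α' - α) * EG F a G s := by
  simp only [EG]
  rw [← Finset.sum_sub_distrib, Finset.mul_sum]
  refine Finset.sum_congr rfl fun k _ => ?_
  rw [EG_prod F G hG α hα, EG_prod F G hG α' hα']; ring

lemma EG_deriv (F : Finset ℝ) (a : ℝ → ℝ) (G : Finset ℝ) (hG : G ⊆ F) (α : ℝ) (hα : α ∈ G) (s : ℝ) :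
    HasDerivAt (fun s => Real.exp (-α * s) * EG F a G s) (Real.exp (-α * s) * EG F a (G.erase α) s) s := by
  have h1 : ∀ k : ℝ, HasDerivAt (fun s : ℝ => Real.exp (k * s)) (k * Real.exp (k * s)) s := by
    intro k
    have := ((hasDerivAt_id s).const_mul k).exp
    simpa [mul_comm] using this
  have h2 : HasDerivAt (fun s => EG F a G s)
      (∑ k ∈ F, (∏ α ∈ F \ G, (k - α)) * a k * (k * Real.exp (k * s))) s := by
    have := HasDerivAt.fun_sum (u := F) (A := fun k s => (∏ α ∈ F \ G, (k - α)) * a k * Real.exp (k * s))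
      (A' := fun k => (∏ α ∈ F \ G, (k - α)) * a k * (k * Real.exp (k * s))) (x := s)
      (fun k _ => (h1 k).const_mul _)
    exact this
  have h3 := (h1 (-α)).fun_mul h2
  refine h3.congr_deriv ?_
  symm
  simp only [EG]
  rw [Finset.mul_sum, Finset.mul_sum, Finset.mul_sum, ← Finset.sum_add_distrib]
  refine Finset.sum_congr rfl fun k _ => ?_
  rw [EG_prod F G hG α hα]; ring

lemma EG_mono (F : Finset ℝ) (a : ℝ → ℝ) (G : Finset ℝ) (hG : G ⊆ F) (α : ℝ) (hα : α ∈ G) (x y σ : ℝ)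
    (h : ∀ s ∈ Ioo x y, 0 ≤ σ * EG F a (G.erase α) s) (hσ : σ ≠ 0) :
    MonotoneOn (fun s => Real.exp (-α * s) * EG F a G s) (Icc x y) ∨
    AntitoneOn (fun s => Real.exp (-α * s) * EG F a G s) (Icc x y) := by
  have hd := EG_deriv F a G hG α hα
  have hcont : ContinuousOn (fun s => Real.exp (-α * s) * EG F a G s) (Icc x y) :=
    fun s _ => (hd s).continuousAt.continuousWithinAt
  rcases lt_or_gt_of_ne hσ with hσ | hσ
  · right
    refine antitoneOn_of_deriv_nonpos (convex_Icc _ _) hcont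
      (fun s _ => (hd s).differentiableAt.differentiableWithinAt) fun s hs => ?_
    rw [interior_Icc] at hs
    rw [(hd s).deriv]
    have := h s hs
    have h2 : EG F a (G.erase α) s ≤ 0 := by
      by_contra hh
      push Not at hh
      nlinarith
    exact mul_nonpos_of_nonneg_of_nonpos (Real.exp_pos _).le h2
  · left
    refine monotoneOn_of_deriv_nonneg (convex_Icc _ _) hcont
      (fun s _ => (hd s).differentiableAt.differentiableWithinAt) fun s hs => ?_
    rw [interior_Icc] at hs
    rw [(hd s).deriv]
    have := h s hs
    have h2 : 0 ≤ EG F a (G.erase α) s := by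
      by_contra hh
      push Not at hh
      nlinarith
    exact mul_nonneg (Real.exp_pos _).le h2

lemma EG_choose (F : Finset ℝ) (a : ℝ → ℝ) (𝒢 : Set (Finset ℝ)) (σ : Finset ℝ → ℝ)
    (hstar : ∀ G ∈ 𝒢, ∀ α ∈ G, ∀ α' ∈ G, α ≠ α' → G.erase α ∈ 𝒢 ∨ G.erase α' ∈ 𝒢)
    (hσ : ∀ G, σ G ≠ 0)
    (G : Finset ℝ) (hG : G ∈ 𝒢) (I : Set ℝ) (hI : I.Nonempty)
    (hp : ∀ G' ∈ 𝒢, G'.card < G.card → ∀ s ∈ I, 0 < σ G' * EG F a G' s) (hpG : ∃ x, 0 < σ G * EG F a G x) :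
    ∃ α ∈ G, ∃ τ : ℝ, τ ≠ 0 ∧ ∀ s ∈ I, 0 ≤ τ * EG F a (G.erase α) s := by
  classical
  obtain ⟨x0, hx0⟩ := hpG
  have hne : G.Nonempty := by
    rw [Finset.nonempty_iff_ne_empty]
    rintro rfl
    rw [EG_empty] at hx0
    simp at hx0
  obtain ⟨α, hα⟩ := hne
  by_cases h1 : ∃ α' ∈ G, α ≠ α'
  · obtain ⟨α', hα', hneq⟩ := h1
    rcases hstar G hG α hα α' hα' hneq with h | h
    · exact ⟨α, hα, σ (G.erase α), hσ _, fun s hs => (hp _ h (Finset.card_erase_lt_of_mem hα) s hs).le⟩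
    · exact ⟨α', hα', σ (G.erase α'), hσ _, fun s hs => (hp _ h (Finset.card_erase_lt_of_mem hα') s hs).le⟩
  · push Not at h1
    refine ⟨α, hα, 1, one_ne_zero, fun s _ => ?_⟩
    have : G.erase α = ∅ := by
      rw [Finset.eq_empty_iff_forall_notMem]
      intro y hy
      rw [Finset.mem_erase] at hy
      exact hy.1 (h1 y hy.2).symm
    rw [this, EG_empty, mul_zero]

lemma EG_ordConnected (F : Finset ℝ) (a : ℝ → ℝ) (𝒢 : Set (Finset ℝ)) (hF : ∀ G ∈ 𝒢, G ⊆ F) (σ : Finset ℝ → ℝ)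
    (hstar : ∀ G ∈ 𝒢, ∀ α ∈ G, ∀ α' ∈ G, α ≠ α' → G.erase α ∈ 𝒢 ∨ G.erase α' ∈ 𝒢)
    (hσ : ∀ G, σ G ≠ 0) (x y : ℝ) (hxy : x ≤ y)
    (hx : ∀ G ∈ 𝒢, 0 < σ G * EG F a G x) (hy : ∀ G ∈ 𝒢, 0 < σ G * EG F a G y) :
    ∀ n : ℕ, ∀ G ∈ 𝒢, G.card = n → ∀ s ∈ Icc x y, 0 < σ G * EG F a G s := by
  intro n
  induction n using Nat.strong_induction_on with
  | _ n ih =>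
    intro G hG hn s hs
    obtain ⟨α, hα, τ, hτ, hτs⟩ := EG_choose F a 𝒢 σ hstar hσ G hG (Icc x y) ⟨x, left_mem_Icc.2 hxy⟩
      (fun G' hG' hlt s hs => ih G'.card (hn ▸ hlt) G' hG' rfl s hs) ⟨x, hx G hG⟩
    have e1 := Real.exp_pos (-α * x)
    have e2 := Real.exp_pos (-α * y)
    have e3 := Real.exp_pos (-α * s)
    have p1 : 0 < σ G * (Real.exp (-α * x) * EG F a G x) := by
      have := mul_pos e1 (hx G hG); linarith
    have p2 : 0 < σ G * (Real.exp (-α * y) * EG F a G y) := by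
      have := mul_pos e2 (hy G hG); linarith
    have key : 0 < σ G * (Real.exp (-α * s) * EG F a G s) := by
      rcases EG_mono F a G (hF G hG) α hα x y τ (fun s hs => hτs s (Ioo_subset_Icc_self hs)) hτ with hm | hm
      · have m1 := hm (left_mem_Icc.2 hxy) hs hs.1
        have m2 := hm hs (right_mem_Icc.2 hxy) hs.2
        dsimp only at m1 m2
        rcases lt_or_gt_of_ne (hσ G) with h | h <;> nlinarith
      · have m1 := hm (left_mem_Icc.2 hxy) hs hs.1
        have m2 := hm hs (right_mem_Icc.2 hxy) hs.2
        dsimp only at m1 m2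
        rcases lt_or_gt_of_ne (hσ G) with h | h <;> nlinarith
    have : σ G * (Real.exp (-α * s) * EG F a G s) = Real.exp (-α * s) * (σ G * EG F a G s) := by ring
    rw [this] at key
    exact pos_of_mul_pos_right key e3.le

lemma EG_rolle (F : Finset ℝ) (a : ℝ → ℝ) (𝒢 : Set (Finset ℝ)) (hF : ∀ G ∈ 𝒢, G ⊆ F) (σ : Finset ℝ → ℝ)
    (hstar : ∀ G ∈ 𝒢, ∀ α ∈ G, ∀ α' ∈ G, α ≠ α' → G.erase α ∈ 𝒢 ∨ G.erase α' ∈ 𝒢)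
    (hσ : ∀ G, σ G ≠ 0) (x y : ℝ) (hxy : x < y)
    (hpos : ∀ s ∈ Ioo x y, ∀ G ∈ 𝒢, 0 < σ G * EG F a G s) (G : Finset ℝ) (hG : G ∈ 𝒢)
    (hx : EG F a G x = 0) (hy : EG F a G y = 0) : False := by
  obtain ⟨m, hm⟩ := nonempty_Ioo.2 hxy
  obtain ⟨α, hα, τ, hτ, hτs⟩ := EG_choose F a 𝒢 σ hstar hσ G hG (Ioo x y) ⟨m, hm⟩
      (fun G' hG' hlt s hs => hpos s hs G' hG') ⟨m, hpos m hm G hG⟩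
  have hmm := Ioo_subset_Icc_self hm
  have h0 : EG F a G m = 0 := by
    have e3 := Real.exp_pos (-α * m)
    have : Real.exp (-α * m) * EG F a G m = 0 := by
      rcases EG_mono F a G (hF G hG) α hα x y τ hτs hτ with hM | hM
      · have m1 := hM (left_mem_Icc.2 hxy.le) hmm hmm.1
        have m2 := hM hmm (right_mem_Icc.2 hxy.le) hmm.2
        dsimp only at m1 m2
        rw [hx, mul_zero] at m1
        rw [hy, mul_zero] at m2
        exact le_antisymm m2 m1
      · have m1 := hM (left_mem_Icc.2 hxy.le) hmm hmm.1
        have m2 := hM hmm (right_mem_Icc.2 hxy.le) hmm.2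
        dsimp only at m1 m2
        rw [hx, mul_zero] at m1
        rw [hy, mul_zero] at m2
        exact le_antisymm m1 m2
    exact (mul_eq_zero.1 this).resolve_left e3.ne'
  have := hpos m hm G hG
  rw [h0, mul_zero] at this
  exact lt_irrefl _ this

lemma precon {X : Type*} [TopologicalSpace X] (R : Set X) (hR : IsPreconnected R) (hRo : IsOpen R)
    (Q : Set (X × ℝ)) (hQ : IsOpen Q) (hQ1 : ∀ t, OrdConnected {s | (t, s) ∈ Q})
    (hne : ∀ t ∈ R, ∃ s, (t, s) ∈ Q) : IsPreconnected {z : X × ℝ | z.1 ∈ R ∧ z ∈ Q} := by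
  intro u v hu hv hcov ⟨zu, hzu, hzu'⟩ ⟨zv, hzv, hzv'⟩
  have hD : IsOpen {z : X × ℝ | z.1 ∈ R ∧ z ∈ Q} := (hRo.preimage continuous_fst).inter hQ
  set D := {z : X × ℝ | z.1 ∈ R ∧ z ∈ Q} with hDd
  have ou : IsOpen (Prod.fst '' (D ∩ u)) := isOpenMap_fst _ (hD.inter hu)
  have ov : IsOpen (Prod.fst '' (D ∩ v)) := isOpenMap_fst _ (hD.inter hv)
  obtain ⟨t, htR, ⟨⟨t1, s1⟩, ⟨h1, h1u⟩, e1⟩, ⟨⟨t2, s2⟩, ⟨h2, h2v⟩, e2⟩⟩ := hR _ _ ou ov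
    (fun t ht => by
      obtain ⟨s, hs⟩ := hne t ht
      have : (t, s) ∈ D := ⟨ht, hs⟩
      rcases hcov this with h | h
      · exact Or.inl ⟨(t, s), ⟨this, h⟩, rfl⟩
      · exact Or.inr ⟨(t, s), ⟨this, h⟩, rfl⟩)
    ⟨zu.1, hzu.1, ⟨zu, ⟨hzu, hzu'⟩, rfl⟩⟩ ⟨zv.1, hzv.1, ⟨zv, ⟨hzv, hzv'⟩, rfl⟩⟩
  dsimp only at e1 e2
  subst e1
  subst e2
  have hpc : IsPreconnected {s | (t2, s) ∈ Q} := (hQ1 t2).isPreconnected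
  have cont : Continuous fun s : ℝ => (t2, s) := by fun_prop
  obtain ⟨s, hs, hsu, hsv⟩ := hpc _ _ (hu.preimage cont) (hv.preimage cont)
    (fun s hs => hcov ⟨htR, hs⟩) ⟨s1, h1.2, h1u⟩ ⟨s2, h2.2, h2v⟩
  exact ⟨(t2, s), ⟨htR, hs⟩, hsu, hsv⟩

/-- series coefficient -/
def aser (Γ : Set ℝ) (C : ℝ → ℝ → ℝ) (k t : ℝ) : ℝ := ∑' γ : Γ, C γ k * Real.exp (-γ.1 * t)

lemma aser_scale (Γ : Set ℝ) (C : ℝ → ℝ → ℝ) (F G : Finset ℝ) (σ t s : ℝ) :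
    ∑ k ∈ F, (∑' γ : Γ, (σ * (∏ α ∈ F \ G, (k - α)) * C γ k) * Real.exp (-γ.1 * t)) * Real.exp (k * s)
      = σ * EG F (fun k => aser Γ C k t) G s := by
  rw [EG, Finset.mul_sum]
  refine Finset.sum_congr rfl fun k _ => ?_
  have : ∀ γ : Γ, (σ * (∏ α ∈ F \ G, (k - α)) * C γ k) * Real.exp (-γ.1 * t) =
    (σ * (∏ α ∈ F \ G, (k - α))) * (C γ k * Real.exp (-γ.1 * t)) := fun γ => by ring
  simp_rw [this]
  rw [tsum_mul_left, aser]; ring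

lemma core {M : AddSubmonoid ℝ} (hM : ∀ x ∈ M, 0 ≤ x) (hPWO : (M : Set ℝ).IsPWO) (Γ : Set ℝ) (hΓ : Γ.IsWF)
    (hdiff : ∀ x ∈ Γ, ∀ y ∈ Γ, y ≤ x → x - y ∈ M) {J : Type} (F : Finset ℝ) (C : J → ℝ → ℝ → ℝ) (A0 : ℝ)
    (hsum : ∀ j, ∀ k ∈ F, Summable fun γ : Γ => |C j γ k| * Real.exp (-γ.1 * A0))
    (Gd : Finset (J × Finset ℝ)) (hGd : ∀ e ∈ Gd, e.2 ⊆ F) (σ : J × Finset ℝ → ℝ) (hσ : ∀ e, σ e ≠ 0)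
    (hstar : ∀ j G, (j, G) ∈ Gd → ∀ α ∈ G, ∀ α' ∈ G, α ≠ α' → (j, G.erase α) ∈ Gd ∨ (j, G.erase α') ∈ Gd)
    (L : Filter (ℝ × ℝ)) [L.NeBot] (hL1 : Filter.Tendsto Prod.fst L Filter.atTop)
    (hL2 : Filter.Tendsto Prod.snd L (nhds 0))
    (hL : ∀ e ∈ Gd, ∀ᶠ z in L, 0 < σ e * EG F (fun k => aser Γ (C e.1) k z.1) e.2 z.2) :
    ∃ (D : Set (ℝ × ℝ)) (δ A' : ℝ), IsPreconnected D ∧ 0 < δ ∧ (∀ z ∈ D, A0 < z.1 ∧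
      ∀ e ∈ Gd, 0 < σ e * EG F (fun k => aser Γ (C e.1) k z.1) e.2 z.2) ∧
      ∀ z : ℝ × ℝ, A' < z.1 → |z.2| < δ →
        (∀ e ∈ Gd, 0 < σ e * EG F (fun k => aser Γ (C e.1) k z.1) e.2 z.2) → z ∈ D := by
  classical
  have hprep : ∀ e ∈ Gd, ∀ᶠ δ in nhdsWithin (0 : ℝ) (Ioi 0), ∀ᶠ A in Filter.atTop,
      ∃ W : Polynomial (tame M hM A), (∀ t, tev t W ≠ 0) ∧ ∀ (t : Set.Ici A) (s : ℝ), |s| ≤ δ →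
        ∃ u > 0, (tev t W).eval s = u * (σ e * EG F (fun k => aser Γ (C e.1) k t.1) e.2 s) := by
    intro e he
    have := prep hM Γ hΓ hdiff F (fun γ k => σ e * (∏ α ∈ F \ e.2, (k - α)) * C e.1 γ k) A0
      (fun k hk => by
        have := (hsum e.1 k hk).mul_left |σ e * (∏ α ∈ F \ e.2, (k - α))|
        refine this.congr fun γ => ?_
        rw [abs_mul (σ e * _)]; ring) (by
        by_contra! hall
        obtain ⟨z, hz⟩ := (hL e he).exists
        rw [← aser_scale] at hz
        refine absurd hz (not_lt.2 (le_of_eq ?_))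
        refine Finset.sum_eq_zero fun k hk => ?_
        have : ∀ γ : Γ, (σ e * (∏ α ∈ F \ e.2, (k - α)) * C e.1 γ k) * Real.exp (-γ.1 * z.1) = 0 := by
          intro γ; rw [hall k hk γ.1 γ.2, zero_mul]
        simp_rw [this]; simp)
    simp_rw [aser_scale] at this
    exact this
  have hδ := (Filter.eventually_all_finset Gd).2 hprep
  obtain ⟨δ, hδ, hδ0⟩ := (hδ.and self_mem_nhdsWithin).exists
  have hδ0 : 0 < δ := hδ0
  have hA := (Filter.eventually_all_finset Gd).2 hδ
  obtain ⟨A, hA, hAA0⟩ := (hA.and (Filter.eventually_gt_atTop A0)).exists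
  choose W hW0 hW using hA
  let con : ℝ → tame M hM A := fun κ => ⟨_, tame_const M hM A κ⟩
  let Wf : (↥Gd ⊕ Bool) → Polynomial (tame M hM A) := Sum.elim (fun e => W e.1 e.2)
    (fun b => if b then Polynomial.C (con δ) - Polynomial.X else Polynomial.C (con δ) + Polynomial.X)
  have hWt : ∀ t : Set.Ici A, tev t (Wf (Sum.inr true)) = Polynomial.C δ - Polynomial.X := by
    intro t
    simp only [Wf, tev, Sum.elim_inr, if_true, map_sub, Polynomial.coe_mapRingHom, Polynomial.map_C, Polynomial.map_X]
    rfl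
  have hWf : ∀ t : Set.Ici A, tev t (Wf (Sum.inr false)) = Polynomial.C δ + Polynomial.X := by
    intro t
    simp only [Wf, tev, Sum.elim_inr, map_add, Polynomial.coe_mapRingHom]
    simp
    rfl
  have hiff : ∀ (t : Set.Ici A) (s : ℝ), (∀ k, 0 < (tev t (Wf k)).eval s) ↔
      |s| < δ ∧ ∀ e ∈ Gd, 0 < σ e * EG F (fun k => aser Γ (C e.1) k t.1) e.2 s := by
    intro t s
    constructor
    · intro h
      have h1 := h (Sum.inr true)
      have h2 := h (Sum.inr false)
      rw [hWt] at h1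
      rw [hWf] at h2
      simp at h1 h2
      have h3 : |s| < δ := abs_lt.2 ⟨by linarith, h1⟩
      refine ⟨h3, fun e he => ?_⟩
      obtain ⟨u, hu, hue⟩ := hW e he t s h3.le
      have h4 := h (Sum.inl ⟨e, he⟩)
      simp only [Wf, Sum.elim_inl] at h4
      rw [hue] at h4
      exact pos_of_mul_pos_right h4 hu.le
    · rintro ⟨h3, h⟩
      rintro (⟨e, he⟩ | b)
      · obtain ⟨u, hu, hue⟩ := hW e he t s h3.le
        simp only [Wf, Sum.elim_inl]
        rw [hue]
        exact mul_pos hu (h e he)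
      · rw [abs_lt] at h3
        cases b
        · rw [hWf]; simp; linarith
        · rw [hWt]; simp; linarith
  have hord : ∀ t : Set.Ici A, OrdConnected {s | ∀ k, 0 < (tev t (Wf k)).eval s} := by
    intro t
    constructor
    intro x hx y hy s hs
    have hx := (hiff t x).1 hx
    have hy := (hiff t y).1 hy
    refine (hiff t s).2 ⟨?_, fun e he => ?_⟩
    · rw [abs_lt]
      exact ⟨lt_of_lt_of_le (abs_lt.1 hx.1).1 hs.1, lt_of_le_of_lt hs.2 (abs_lt.1 hy.1).2⟩
    · exact EG_ordConnected F (fun k => aser Γ (C e.1) k t.1) {G | (e.1, G) ∈ Gd} (fun G hG => hGd _ hG)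
        (fun G => σ (e.1, G)) (fun G hG => hstar e.1 G hG) (fun G => hσ _) x y (hs.1.trans hs.2)
        (fun G hG => hx.2 _ hG) (fun G hG => hy.2 _ hG) _ e.2 he rfl s hs
  have hng := no_gap hPWO δ Wf
    (fun t s hs => by
      have := ((hiff t s).1 hs).1
      rw [abs_lt] at this
      exact ⟨this.1.le, this.2.le⟩)
    hord
    (fun t k a b hab ha hb hsub => by
      rintro ⟨h1, h2⟩
      rcases k with ⟨e, he⟩ | k
      · simp only [Wf, Sum.elim_inl] at h1 h2
        obtain ⟨u, hu, hue⟩ := hW e he t a (abs_le.2 ha)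
        obtain ⟨u', hu', hue'⟩ := hW e he t b (abs_le.2 hb)
        rw [hue] at h1
        rw [hue'] at h2
        have h1' := (mul_eq_zero.1 ((mul_eq_zero.1 h1).resolve_left hu.ne')).resolve_left (hσ e)
        have h2' := (mul_eq_zero.1 ((mul_eq_zero.1 h2).resolve_left hu'.ne')).resolve_left (hσ e)
        exact EG_rolle F (fun k => aser Γ (C e.1) k t.1) {G | (e.1, G) ∈ Gd} (fun G hG => hGd _ hG)
          (fun G => σ (e.1, G)) (fun G hG => hstar e.1 G hG) (fun G => hσ _) a b hab
          (fun s hs G hG => ((hiff t s).1 (hsub hs)).2 _ hG) e.2 he h1' h2'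
      · cases k
        · rw [hWf] at h1 h2; simp at h1 h2; linarith
        · rw [hWt] at h1 h2; simp at h1 h2; linarith)
    (fun t k => by
      rcases k with ⟨e, he⟩ | k
      · exact hW0 e he t
      · cases k
        · rw [hWf]
          intro h
          have := congrArg (fun p => Polynomial.eval δ p) h
          simp at this; linarith
        · rw [hWt]
          intro h
          have := congrArg (fun p => Polynomial.eval 0 p) h
          simp at this; linarith)
  obtain ⟨A', hA'⟩ := hng
  have hLall : ∀ᶠ z in L, ∀ e ∈ Gd, 0 < σ e * EG F (fun k => aser Γ (C e.1) k z.1) e.2 z.2 :=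
    (Filter.eventually_all_finset Gd).2 hL
  have hLs : ∀ᶠ z in L, |z.2| < δ := by
    have := hL2.abs
    rw [abs_zero] at this
    exact this.eventually_lt_const hδ0
  have hA'1 : ∀ t : Set.Ici A, A' < t.1 → ∃ s, ∀ k, 0 < (tev t (Wf k)).eval s := by
    rcases hA' with h | h
    · exact h
    · exfalso
      obtain ⟨z, hz1, hz2, hz3, hz4⟩ := (hLall.and (hLs.and ((hL1.eventually_gt_atTop A').and
        (hL1.eventually_gt_atTop A)))).exists
      exact h ⟨z.1, hz4.le⟩ hz3 ⟨z.2, (hiff _ _).2 ⟨hz2, hz1⟩⟩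
  let R : Set (Set.Ici A) := {t | max A A' < t.1}
  have hRo : IsOpen R := isOpen_lt continuous_const continuous_subtype_val
  have hconn : IsPreconnected R := by
    rw [← Topology.IsInducing.subtypeVal.isPreconnected_image]
    have : Subtype.val '' R = Ioi (max A A') := by
      ext x
      simp only [mem_image, mem_Ioi, R]
      constructor
      · rintro ⟨y, h, rfl⟩; exact h
      · intro h; exact ⟨⟨x, Set.mem_Ici.2 ((le_max_left A A').trans (le_of_lt h))⟩, h, rfl⟩
    rw [this]
    exact isPreconnected_Ioi
  let Q : Set (Set.Ici A × ℝ) := {z | ∀ k, 0 < (tev z.1 (Wf k)).eval z.2}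
  have hQo : IsOpen Q := by
    simp only [Q]
    rw [ofPred_forall]
    exact isOpen_iInter_of_finite fun k => isOpen_lt continuous_const (tev_continuous _)
  have hD := precon R hconn hRo Q hQo hord
    (fun t ht => hA'1 t (lt_of_le_of_lt (le_max_right _ _) ht))
  refine ⟨(fun z : Set.Ici A × ℝ => (z.1.1, z.2)) '' {z | z.1 ∈ R ∧ z ∈ Q}, δ, max A A',
    hD.image _ (by fun_prop), hδ0, ?_, ?_⟩
  · rintro _ ⟨z, ⟨h1, h2⟩, rfl⟩
    exact ⟨lt_of_lt_of_le hAA0 z.1.2, ((hiff z.1 z.2).1 h2).2⟩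
  · intro z h1 h2 h3
    exact ⟨(⟨z.1, Set.mem_Ici.2 ((le_max_left A A').trans h1.le)⟩, z.2), ⟨h1, (hiff _ _).2 ⟨h2, h3⟩⟩, rfl⟩

/-- exponential monomials -/
def emono (l : ℝ × ℝ) : ℝ × ℝ → ℝ := fun z => Real.exp (l.1 * z.1 + l.2 * z.2)

/-- exponential sums -/
def ES : Submodule ℝ (ℝ × ℝ → ℝ) := Submodule.span ℝ (range emono)

lemma emono_mem (l : ℝ × ℝ) : emono l ∈ ES := Submodule.subset_span ⟨l, rfl⟩

lemma ES_const (c : ℝ) : (fun _ => c : ℝ × ℝ → ℝ) ∈ ES := by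
  have := ES.smul_mem c (emono_mem 0)
  convert this using 1
  funext z; simp [emono]

lemma ES_exp (p q r : ℝ) : (fun z : ℝ × ℝ => Real.exp (p * z.1 + q * z.2 + r)) ∈ ES := by
  have := ES.smul_mem (Real.exp r) (emono_mem (p, q))
  convert this using 1
  funext z; simp [emono, Real.exp_add]; ring

lemma ES_mul {f g : ℝ × ℝ → ℝ} (hf : f ∈ ES) (hg : g ∈ ES) : (fun z => f z * g z) ∈ ES := by
  induction hf using Submodule.span_induction with
  | mem f hf =>
    obtain ⟨l, rfl⟩ := hf
    induction hg using Submodule.span_induction with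
    | mem g hg =>
      obtain ⟨m, rfl⟩ := hg
      convert emono_mem (l + m) using 1
      funext z; simp only [emono, ← Real.exp_add, Prod.fst_add, Prod.snd_add]; congr 1; ring
    | zero => simpa using ES_const 0
    | add f g _ _ hf hg =>
      have := ES.add_mem hf hg
      convert this using 1
      funext z; simp [mul_add]
    | smul c f _ hf =>
      have := ES.smul_mem c hf
      convert this using 1
      funext z; simp; ring
  | zero => simpa using ES_const 0
  | add f g _ _ hf hg =>
      have := ES.add_mem hf hg
      convert this using 1
      funext z; simp [add_mul]
  | smul c f _ hf =>
      have := ES.smul_mem c hf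
      convert this using 1
      funext z; simp; ring

lemma ES_rep {f : ℝ × ℝ → ℝ} (hf : f ∈ ES) : ∃ c : (ℝ × ℝ) →₀ ℝ, ∀ z, f z =
    ∑ l ∈ c.support, c l * Real.exp (l.1 * z.1 + l.2 * z.2) := by
  obtain ⟨c, hc⟩ := (Finsupp.mem_span_range_iff_exists_finsupp).1 hf
  refine ⟨c, fun z => ?_⟩
  rw [← hc, Finsupp.sum, Finset.sum_apply]
  rfl

lemma ES_dom {f : ℝ × ℝ → ℝ} (hf : f ∈ ES) : ∃ N ∈ ES, ∀ z, |f z| ≤ N z := by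
  induction hf using Submodule.span_induction with
  | mem f hf =>
    obtain ⟨l, rfl⟩ := hf
    exact ⟨_, emono_mem l, fun z => by simp [emono]⟩
  | zero => exact ⟨0, ES.zero_mem, fun z => by simp⟩
  | add f g _ _ hf hg =>
    obtain ⟨N, hN, h1⟩ := hf
    obtain ⟨N', hN', h2⟩ := hg
    exact ⟨N + N', ES.add_mem hN hN', fun z => (abs_add_le _ _).trans (add_le_add (h1 z) (h2 z))⟩
  | smul c f _ hf =>
    obtain ⟨N, hN, h1⟩ := hf
    exact ⟨|c| • N, ES.smul_mem _ hN, fun z => by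
      simp only [Pi.smul_apply, smul_eq_mul, abs_mul]; gcongr; exact h1 z⟩

lemma ES_continuous {f : ℝ × ℝ → ℝ} (hf : f ∈ ES) : Continuous f := by
  induction hf using Submodule.span_induction with
  | mem f hf =>
    obtain ⟨l, rfl⟩ := hf
    unfold emono
    fun_prop
  | zero => exact continuous_const
  | add f g _ _ hf hg => exact hf.add hg
  | smul c f _ hf => exact hf.const_smul c

/-- the convex set of functions between two ultrafilters -/
def InI (U V : Ultrafilter (ℝ × ℝ)) (f : ℝ × ℝ → ℝ) : Prop :=
  ∃ e ∈ ES, (∀ᶠ z in (U : Filter (ℝ × ℝ)), e z ≤ 0) ∧ ∀ᶠ z in (V : Filter (ℝ × ℝ)), |f z| ≤ e z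

section
variable {U V : Ultrafilter (ℝ × ℝ)}

lemma InI.of_le {f g : ℝ × ℝ → ℝ} (h : InI U V g) (hfg : ∀ᶠ z in (V : Filter (ℝ × ℝ)), |f z| ≤ |g z|) :
    InI U V f := by
  obtain ⟨e, he, h1, h2⟩ := h
  refine ⟨e, he, h1, ?_⟩
  filter_upwards [h2, hfg] with z a b using b.trans a

lemma InI.add {f g : ℝ × ℝ → ℝ} (hf : InI U V f) (hg : InI U V g) : InI U V (fun z => f z + g z) := by
  obtain ⟨e, he, h1, h2⟩ := hf
  obtain ⟨e', he', h1', h2'⟩ := hg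
  refine ⟨e + e', ES.add_mem he he', ?_, ?_⟩
  · filter_upwards [h1, h1'] with z a b using add_nonpos a b
  · filter_upwards [h2, h2'] with z a b using (abs_add_le _ _).trans (add_le_add a b)

lemma InI.smul {f : ℝ × ℝ → ℝ} (c : ℝ) (hf : InI U V f) : InI U V (fun z => c * f z) := by
  obtain ⟨e, he, h1, h2⟩ := hf
  refine ⟨|c| • e, ES.smul_mem _ he, ?_, ?_⟩
  · filter_upwards [h1] with z a using mul_nonpos_of_nonneg_of_nonpos (abs_nonneg _) a
  · filter_upwards [h2] with z a
    rw [abs_mul]; exact mul_le_mul_of_nonneg_left a (abs_nonneg _)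

lemma InI.zero : InI U V (fun _ => 0) := ⟨0, ES.zero_mem, by simp, by simp⟩

lemma InI.of_one (h1 : InI U V (fun _ => 1)) {f : ℝ × ℝ → ℝ} (hf : f ∈ ES) : InI U V f := by
  obtain ⟨e, he, h1, h2⟩ := h1
  obtain ⟨N, hN, hfN⟩ := ES_dom hf
  have hN0 : ∀ z, 0 ≤ N z := fun z => (abs_nonneg _).trans (hfN z)
  refine ⟨_, ES_mul he hN, ?_, ?_⟩
  · filter_upwards [h1] with z a using mul_nonpos_of_nonpos_of_nonneg a (hN0 z)
  · filter_upwards [h2] with z a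
    rw [abs_one] at a
    exact (hfN z).trans (le_mul_of_one_le_left (hN0 z) a)

lemma InI.dich {f : ℝ × ℝ → ℝ} (hf : f ∈ ES) (hI : ¬ InI U V f) :
    ∃ σ : ℝ, σ ≠ 0 ∧ (∀ᶠ z in (U : Filter (ℝ × ℝ)), 0 < σ * f z) ∧ ∀ᶠ z in (V : Filter (ℝ × ℝ)), 0 < σ * f z := by
  by_cases h1 : ∀ᶠ z in (U : Filter (ℝ × ℝ)), f z ≤ 0
  · have h2 : ∀ᶠ z in (V : Filter (ℝ × ℝ)), f z < 0 := by
      by_contra h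
      rw [← Ultrafilter.eventually_not] at h
      apply hI
      refine ⟨f, hf, h1, ?_⟩
      filter_upwards [h] with z a
      rw [abs_of_nonneg (not_lt.1 a)]
    have h3 : ∀ᶠ z in (U : Filter (ℝ × ℝ)), f z < 0 := by
      by_contra h
      rw [← Ultrafilter.eventually_not] at h
      apply hI
      refine ⟨-f, ES.neg_mem hf, ?_, ?_⟩
      · filter_upwards [h] with z a using neg_nonpos.2 (not_lt.1 a)
      · filter_upwards [h2] with z a
        rw [abs_of_neg a]; rfl
    refine ⟨-1, by norm_num, ?_, ?_⟩
    · filter_upwards [h3] with z a; linarith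
    · filter_upwards [h2] with z a; linarith
  · rw [← Ultrafilter.eventually_not] at h1
    refine ⟨1, one_ne_zero, ?_, ?_⟩
    · filter_upwards [h1] with z a; linarith
    · by_contra h
      rw [← Ultrafilter.eventually_not] at h
      apply hI
      refine ⟨-f, ES.neg_mem hf, ?_, ?_⟩
      · filter_upwards [h1] with z a using neg_nonpos.2 (not_le.1 a).le
      · filter_upwards [h] with z a
        rw [abs_of_nonpos (by linarith)]; rfl

/-- the geometric property -/
def Geo (U V : Ultrafilter (ℝ × ℝ)) : Prop :=
  ∀ (n : ℕ) (P : Fin n → ℝ × ℝ → ℝ), (∀ j, P j ∈ ES) → (∀ j, ¬ InI U V (P j)) →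
    ∃ D : Set (ℝ × ℝ), IsPreconnected D ∧ D ∈ U ∧ D ∈ V ∧ ∀ z ∈ D, ∀ j, P j z ≠ 0

lemma Geo.of_one (h1 : InI U V (fun _ => 1)) : Geo U V := fun n P hP hI =>
  ⟨univ, isPreconnected_univ, Filter.univ_mem, Filter.univ_mem, fun _ _ j => absurd (h1.of_one (hP j)) (hI j)⟩

lemma geo_of_core (φ ψ : ℝ → ℝ) (hφ : Continuous φ)
    (hψU : Filter.Tendsto (fun z : ℝ × ℝ => ψ z.1) U Filter.atTop)
    (hψV : Filter.Tendsto (fun z : ℝ × ℝ => ψ z.1) V Filter.atTop)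
    (hinvU : ∀ᶠ z in (U : Filter (ℝ × ℝ)), φ (ψ z.1) = z.1)
    (hinvV : ∀ᶠ z in (V : Filter (ℝ × ℝ)), φ (ψ z.1) = z.1)
    (hsU : Filter.Tendsto (fun z : ℝ × ℝ => z.2) U (nhds 0))
    (hsV : Filter.Tendsto (fun z : ℝ × ℝ => z.2) V (nhds 0))
    (hser : ∀ B : Finset ℝ, ∃ (M : AddSubmonoid ℝ) (Γ : Set ℝ) (Cb : ℝ → ℝ → ℝ), (∀ x ∈ M, 0 ≤ x) ∧ (M : Set ℝ).IsPWO ∧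
      Γ.IsWF ∧ (∀ x ∈ Γ, ∀ y ∈ Γ, y ≤ x → x - y ∈ M) ∧ ∀ β ∈ B, ∀ t, 0 ≤ t →
        (Summable fun γ : Γ => |Cb β γ| * Real.exp (-γ.1 * t)) ∧
        Real.exp (β * φ t) = ∑' γ : Γ, Cb β γ * Real.exp (-γ.1 * t)) :
    Geo U V := by
  classical
  intro n P hP hI
  choose c hc using fun j => ES_rep (hP j)
  let F : Finset ℝ := Finset.univ.biUnion fun j => (c j).support.image Prod.snd
  let B : Finset ℝ := Finset.univ.biUnion fun j => (c j).support.image Prod.fst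
  obtain ⟨M, Γ, Cb, hM, hPWO, hΓ, hdiff, hCb⟩ := hser B
  let a : Fin n → ℝ → ℝ → ℝ := fun j x k => ∑ β ∈ B, c j (β, k) * Real.exp (β * x)
  have hPa : ∀ j (z : ℝ × ℝ), P j z = EG F (a j z.1) F z.2 := by
    intro j z
    rw [EG_full, hc]
    simp only [a]
    have hsub : (c j).support ⊆ B ×ˢ F := by
      intro l hl
      refine Finset.mem_product.2 ⟨?_, ?_⟩
      · exact Finset.mem_biUnion.2 ⟨j, Finset.mem_univ _, Finset.mem_image_of_mem _ hl⟩
      · exact Finset.mem_biUnion.2 ⟨j, Finset.mem_univ _, Finset.mem_image_of_mem _ hl⟩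
    rw [Finset.sum_subset hsub, Finset.sum_product_right]
    · refine Finset.sum_congr rfl fun k _ => ?_
      rw [Finset.sum_mul]
      refine Finset.sum_congr rfl fun β _ => ?_
      rw [Real.exp_add]; ring
    · intro l _ hl
      rw [Finsupp.notMem_support_iff.1 hl, zero_mul]
  let Q : Fin n × Finset ℝ → ℝ × ℝ → ℝ := fun e z => EG F (a e.1 z.1) e.2 z.2
  have hQES : ∀ e, Q e ∈ ES := by
    intro e
    have : Q e = ∑ k ∈ F, ∑ β ∈ B, ((∏ α ∈ F \ e.2, (k - α)) * c e.1 (β, k)) • emono (β, k) := by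
      funext z
      simp only [Q, EG, a, Finset.sum_apply, Pi.smul_apply, smul_eq_mul, emono]
      refine Finset.sum_congr rfl fun k _ => ?_
      rw [Finset.mul_sum, Finset.sum_mul]
      refine Finset.sum_congr rfl fun β _ => ?_
      rw [Real.exp_add]; ring
    rw [this]
    exact ES.sum_mem fun k _ => ES.sum_mem fun β _ => ES.smul_mem _ (emono_mem _)
  let Gd : Finset (Fin n × Finset ℝ) := (Finset.univ ×ˢ F.powerset).filter fun e => ¬ InI U V (Q e)
  have hGd : ∀ e, e ∈ Gd ↔ e.2 ⊆ F ∧ ¬ InI U V (Q e) := by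
    intro e; simp [Gd]
  have hσ : ∀ e, ∃ σ : ℝ, σ ≠ 0 ∧ (e ∈ Gd → (∀ᶠ z in (U : Filter (ℝ × ℝ)), 0 < σ * Q e z) ∧
      ∀ᶠ z in (V : Filter (ℝ × ℝ)), 0 < σ * Q e z) := by
    intro e
    by_cases he : e ∈ Gd
    · obtain ⟨σ, h0, h⟩ := InI.dich (hQES e) ((hGd e).1 he).2
      exact ⟨σ, h0, fun _ => h⟩
    · exact ⟨1, one_ne_zero, fun h => absurd h he⟩
  choose σ hσ0 hσ using hσ
  let C : Fin n → ℝ → ℝ → ℝ := fun j γ k => ∑ β ∈ B, c j (β, k) * Cb β γ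
  have haser : ∀ j k t, 0 ≤ t → aser Γ (C j) k t = a j (φ t) k := by
    intro j k t ht
    simp only [aser, C, a]
    have hs : ∀ β ∈ B, Summable fun γ : Γ => c j (β, k) * (Cb β γ * Real.exp (-γ.1 * t)) := by
      intro β hβ
      refine Summable.mul_left _ ?_
      refine Summable.of_norm_bounded (hCb β hβ t ht).1 fun γ => ?_
      rw [Real.norm_eq_abs, abs_mul, Real.abs_exp]
    have : ∀ γ : Γ, (∑ β ∈ B, c j (β, k) * Cb β γ) * Real.exp (-γ.1 * t) =
        ∑ β ∈ B, c j (β, k) * (Cb β γ * Real.exp (-γ.1 * t)) := by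
      intro γ; rw [Finset.sum_mul]; exact Finset.sum_congr rfl fun β _ => by ring
    simp_rw [this]
    rw [Summable.tsum_finsetSum hs]
    refine Finset.sum_congr rfl fun β hβ => ?_
    rw [tsum_mul_left, (hCb β hβ t ht).2]
  have hQt : ∀ (e : Fin n × Finset ℝ) (t s : ℝ), 0 ≤ t →
      EG F (fun k => aser Γ (C e.1) k t) e.2 s = Q e (φ t, s) := by
    intro e t s ht
    simp only [Q]
    congr 1
    funext k
    exact haser _ _ _ ht
  let L : Filter (ℝ × ℝ) := (U : Filter (ℝ × ℝ)).map fun z => (ψ z.1, z.2)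
  have hU0 : ∀ᶠ z in (U : Filter (ℝ × ℝ)), 0 ≤ ψ z.1 := hψU.eventually_ge_atTop 0
  have hV0 : ∀ᶠ z in (V : Filter (ℝ × ℝ)), 0 ≤ ψ z.1 := hψV.eventually_ge_atTop 0
  obtain ⟨D, δ, A', hD, hδ, hDpos, hDmem⟩ := core hM hPWO Γ hΓ hdiff F C 0
    (fun j k hk => by
      have : Summable fun γ : Γ => ∑ β ∈ B, |c j (β, k)| * (|Cb β γ| * Real.exp (-γ.1 * 0)) :=
        summable_sum fun β hβ => (hCb β hβ 0 le_rfl).1.mul_left _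
      refine Summable.of_nonneg_of_le (fun _ => by positivity) (fun γ => ?_) this
      have h : |C j γ k| ≤ ∑ β ∈ B, |c j (β, k)| * |Cb β γ| := by
        refine (Finset.abs_sum_le_sum_abs _ _).trans (Finset.sum_le_sum fun β _ => ?_)
        rw [abs_mul]
      calc _ ≤ (∑ β ∈ B, |c j (β, k)| * |Cb β γ|) * Real.exp (-γ.1 * 0) := by gcongr
        _ = _ := by rw [Finset.sum_mul]; exact Finset.sum_congr rfl fun β _ => by ring)
    Gd (fun e he => ((hGd e).1 he).1) σ hσ0
    (fun j G hG α hα α' hα' hne => by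
      obtain ⟨h1, h2⟩ := (hGd _).1 hG
      rw [hGd, hGd]
      by_contra! hcon
      have h1 : G ⊆ F := h1
      have i1 := hcon.1 ((Finset.erase_subset _ _).trans h1)
      have i2 := hcon.2 ((Finset.erase_subset _ _).trans h1)
      apply h2
      have i3 := (i1.add (i2.smul (-1))).smul (α' - α)⁻¹
      refine i3.of_le (Filter.Eventually.of_forall fun z => le_of_eq ?_)
      congr 1
      have := EG_diff F (a j z.1) G h1 α α' hα hα' z.2
      have hne' : α' - α ≠ 0 := sub_ne_zero.2 hne.symm
      simp only [Q]
      rw [eq_inv_mul_iff_mul_eq₀ hne', ← this]; ring)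
    L (by
      have : Filter.Tendsto Prod.fst L Filter.atTop := Filter.tendsto_map'_iff.2 hψU
      exact this) (Filter.tendsto_map'_iff.2 hsU)
    (fun e he => by
      simp only [L, Filter.eventually_map]
      filter_upwards [(hσ e he).1, hU0, hinvU] with z h1 h2 h3
      rw [hQt _ _ _ h2, h3]
      exact h1)
  have hmem : ∀ Z : Ultrafilter (ℝ × ℝ), (∀ᶠ z in (Z : Filter (ℝ × ℝ)), A' < ψ z.1) →
      (∀ᶠ z in (Z : Filter (ℝ × ℝ)), 0 ≤ ψ z.1) →
      (∀ᶠ z in (Z : Filter (ℝ × ℝ)), φ (ψ z.1) = z.1) →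
      (∀ᶠ z in (Z : Filter (ℝ × ℝ)), |z.2| < δ) →
      (∀ e ∈ Gd, ∀ᶠ z in (Z : Filter (ℝ × ℝ)), 0 < σ e * Q e z) →
      (fun z : ℝ × ℝ => (φ z.1, z.2)) '' D ∈ Z := by
    intro Z z1 z2 z3 z4 z5
    have z6 := (Filter.eventually_all_finset Gd).2 z5
    have : ∀ᶠ z in (Z : Filter (ℝ × ℝ)), z ∈ (fun z : ℝ × ℝ => (φ z.1, z.2)) '' D := by
      filter_upwards [z1, z2, z3, z4, z6] with z h1 h2 h3 h4 h5
      refine ⟨(ψ z.1, z.2), hDmem _ h1 h4 fun e he => ?_, by simp [h3]⟩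
      rw [hQt _ _ _ h2]
      dsimp only
      rw [h3]
      exact h5 e he
    exact this
  have habs : ∀ Z : Ultrafilter (ℝ × ℝ), Filter.Tendsto (fun z : ℝ × ℝ => z.2) Z (nhds 0) →
      ∀ᶠ z in (Z : Filter (ℝ × ℝ)), |z.2| < δ := by
    intro Z hZ
    have := hZ.abs
    rw [abs_zero] at this
    exact this.eventually_lt_const hδ
  refine ⟨(fun z : ℝ × ℝ => (φ z.1, z.2)) '' D, hD.image _ (by fun_prop), ?_, ?_, ?_⟩
  · exact hmem U (hψU.eventually_gt_atTop A') hU0 hinvU (habs U hsU) (fun e he => (hσ e he).1)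
  · exact hmem V (hψV.eventually_gt_atTop A') hV0 hinvV (habs V hsV) (fun e he => (hσ e he).2)
  · rintro _ ⟨z, hz, rfl⟩ j h0
    obtain ⟨hz0, hzp⟩ := hDpos z hz
    have hj : (j, F) ∈ Gd := by
      rw [hGd]
      refine ⟨subset_rfl, ?_⟩
      have : Q (j, F) = P j := by funext z; rw [hPa]
      rw [this]; exact hI j
    have := hzp _ hj
    rw [hQt _ _ _ hz0.le] at this
    have h2 : Q (j, F) (φ z.1, z.2) = 0 := by rw [← h0, hPa]
    rw [h2, mul_zero] at this
    exact lt_irrefl _ this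

end

section
variable {U V : Ultrafilter (ℝ × ℝ)}

lemma geo_case1
    (hψU : Filter.Tendsto (fun z : ℝ × ℝ => z.1) U Filter.atTop)
    (hψV : Filter.Tendsto (fun z : ℝ × ℝ => z.1) V Filter.atTop)
    (hsU : Filter.Tendsto (fun z : ℝ × ℝ => z.2) U (nhds 0))
    (hsV : Filter.Tendsto (fun z : ℝ × ℝ => z.2) V (nhds 0)) : Geo U V := by
  classical
  refine geo_of_core id id continuous_id hψU hψV (by simp) (by simp) hsU hsV fun B => ?_
  let Γ : Finset ℝ := B.image fun x => -x
  let S : Finset ℝ := ((Γ ×ˢ Γ).image fun p => p.1 - p.2).filter fun x => 0 ≤ x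
  have hS : ∀ x ∈ (S : Set ℝ), 0 ≤ x := by
    intro x hx
    exact (Finset.mem_filter.1 (Finset.mem_coe.1 hx)).2
  refine ⟨AddSubmonoid.closure (S : Set ℝ), (Γ : Set ℝ), fun β γ => if γ = -β then 1 else 0, ?_, ?_, ?_, ?_, ?_⟩
  · intro x hx
    induction hx using AddSubmonoid.closure_induction with
    | mem x hx => exact hS x hx
    | zero => exact le_rfl
    | add x y _ _ hx hy => exact add_nonneg hx hy
  · exact Set.IsPWO.addSubmonoid_closure hS S.finite_toSet.isPWO
  · exact Γ.finite_toSet.isWF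
  · intro x hx y hy hxy
    refine AddSubmonoid.subset_closure ?_
    simp only [S, Finset.coe_filter, mem_ofPred_eq, Finset.mem_image, Finset.mem_product]
    exact ⟨⟨(x, y), ⟨hx, hy⟩, rfl⟩, sub_nonneg.2 hxy⟩
  · intro β hβ t ht
    refine ⟨(hasSum_fintype _).summable, ?_⟩
    have hm : -β ∈ (Γ : Set ℝ) := by simp [Γ, hβ]
    rw [tsum_eq_single (⟨-β, hm⟩ : (Γ : Set ℝ))]
    · simp
    · intro γ hγ
      have : γ.1 ≠ -β := fun h => hγ (Subtype.ext h)
      simp [this]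

lemma geo_case2
    (hψU : Filter.Tendsto (fun z : ℝ × ℝ => z.1) U (nhds 0))
    (hψV : Filter.Tendsto (fun z : ℝ × ℝ => z.1) V (nhds 0))
    (hpU : ∀ᶠ z in (U : Filter (ℝ × ℝ)), 0 < z.1)
    (hpV : ∀ᶠ z in (V : Filter (ℝ × ℝ)), 0 < z.1)
    (hsU : Filter.Tendsto (fun z : ℝ × ℝ => z.2) U (nhds 0))
    (hsV : Filter.Tendsto (fun z : ℝ × ℝ => z.2) V (nhds 0)) : Geo U V := by
  have hlog : ∀ Z : Ultrafilter (ℝ × ℝ), Filter.Tendsto (fun z : ℝ × ℝ => z.1) Z (nhds 0) →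
      (∀ᶠ z in (Z : Filter (ℝ × ℝ)), 0 < z.1) →
      Filter.Tendsto (fun z : ℝ × ℝ => -Real.log z.1) Z Filter.atTop := by
    intro Z h1 h2
    have h3 : Filter.Tendsto (fun z : ℝ × ℝ => z.1) Z (nhdsWithin 0 (Ioi 0)) :=
      tendsto_nhdsWithin_iff.2 ⟨h1, h2⟩
    exact Filter.tendsto_neg_atBot_atTop.comp (Real.tendsto_log_nhdsGT_zero.comp h3)
  refine geo_of_core (fun t => Real.exp (-t)) (fun x => - Real.log x) (by fun_prop) (hlog U hψU hpU) (hlog V hψV hpV)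
    ?_ ?_ hsU hsV fun B => ?_
  · filter_upwards [hpU] with z hz
    rw [neg_neg, Real.exp_log hz]
  · filter_upwards [hpV] with z hz
    rw [neg_neg, Real.exp_log hz]
  have hPWO : (range (Nat.cast : ℕ → ℝ)).IsPWO := by
    rw [← image_univ]
    exact (Set.isPWO_of_wellQuasiOrderedLE univ).image_of_monotone Nat.mono_cast
  refine ⟨AddMonoidHom.mrange (Nat.castAddMonoidHom ℝ), range (Nat.cast : ℕ → ℝ),
    fun β γ => β ^ ⌊γ⌋₊ / (⌊γ⌋₊.factorial : ℝ), ?_, ?_, ?_, ?_, ?_⟩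
  · rintro _ ⟨n, rfl⟩; simp
  · simpa using hPWO
  · exact hPWO.isWF
  · rintro _ ⟨n, rfl⟩ _ ⟨m, rfl⟩ h
    refine ⟨n - m, ?_⟩
    have : m ≤ n := by exact_mod_cast h
    simp [Nat.cast_sub this]
  · intro β hβ t ht
    let e : ℕ ≃ range (Nat.cast : ℕ → ℝ) := Equiv.ofInjective _ Nat.cast_injective
    have he : ∀ n, ((e n : range (Nat.cast : ℕ → ℝ)) : ℝ) = n := fun n => rfl
    have hterm : ∀ n : ℕ, β ^ n / (n.factorial : ℝ) * Real.exp (-(n : ℝ) * t) =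
        (β * Real.exp (-t)) ^ n / (n.factorial : ℝ) := by
      intro n
      rw [mul_pow, ← Real.exp_nat_mul]
      have : (n : ℝ) * -t = -(n : ℝ) * t := by ring
      rw [this]; ring
    constructor
    · rw [← e.summable_iff]
      refine (exp_series (β * Real.exp (-t))).1.congr fun n => ?_
      rw [← hterm, norm_mul, Real.norm_eq_abs, Real.norm_eq_abs, Real.abs_exp]
      simp [he]
    · rw [← e.tsum_eq, ← (exp_series (β * Real.exp (-t))).2]
      refine tsum_congr fun n => ?_
      rw [← hterm]
      simp [he]
end

section
variable {U V : Ultrafilter (ℝ × ℝ)}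

lemma ES_affine (a b e c d k : ℝ) {f : ℝ × ℝ → ℝ} (hf : f ∈ ES) :
    (fun z : ℝ × ℝ => f (a * z.1 + b * z.2 + e, c * z.1 + d * z.2 + k)) ∈ ES := by
  induction hf using Submodule.span_induction with
  | mem f hf =>
    obtain ⟨l, rfl⟩ := hf
    convert ES_exp (l.1 * a + l.2 * c) (l.1 * b + l.2 * d) (l.1 * e + l.2 * k) using 1
    funext z; simp only [emono]; congr 1; ring
  | zero => exact ES.zero_mem
  | add f g _ _ hf hg => exact ES.add_mem hf hg
  | smul c f _ hf => exact ES.smul_mem c hf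

lemma Geo.transfer (T T' : ℝ × ℝ → ℝ × ℝ) (hT' : Continuous T') (h1 : ∀ z, T' (T z) = z)
    (hES : ∀ f ∈ ES, (fun z => f (T z)) ∈ ES) (hES' : ∀ f ∈ ES, (fun z => f (T' z)) ∈ ES)
    (hG : Geo (U.map T) (V.map T)) : Geo U V := by
  intro n P hP hI
  obtain ⟨D, hD, hDU, hDV, hDP⟩ := hG n (fun j z => P j (T' z)) (fun j => hES' _ (hP j)) (by
    rintro j ⟨e, he, e1, e2⟩
    refine hI j ⟨_, hES e he, ?_, ?_⟩
    · exact e1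
    · have e2 : ∀ᶠ z in (V : Filter (ℝ × ℝ)), |P j (T' (T z))| ≤ e (T z) := e2
      simpa only [h1] using e2)
  have key : ∀ z, z ∈ T ⁻¹' D → z ∈ T' '' D := fun z hz => ⟨T z, hz, h1 z⟩
  refine ⟨T' '' D, hD.image _ hT'.continuousOn, ?_, ?_, ?_⟩
  · exact Filter.mem_of_superset (Ultrafilter.mem_map.1 hDU) key
  · exact Filter.mem_of_superset (Ultrafilter.mem_map.1 hDV) key
  · rintro _ ⟨z, hz, rfl⟩ j
    exact hDP z hz j

lemma cmp_one (p q r r' : ℝ) (hr : r < r')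
    (hU : ∀ᶠ z in (U : Filter (ℝ × ℝ)), p * z.1 + q * z.2 ≤ r)
    (hV : ∀ᶠ z in (V : Filter (ℝ × ℝ)), r' ≤ p * z.1 + q * z.2) : InI U V (fun _ => 1) := by
  have h0 : 0 < Real.exp r' - Real.exp r := sub_pos.2 (Real.exp_lt_exp.2 hr)
  refine ⟨(Real.exp r' - Real.exp r)⁻¹ • (emono (p, q) - fun _ => Real.exp r),
    ES.smul_mem _ (ES.sub_mem (emono_mem _) (ES_const _)), ?_, ?_⟩
  · filter_upwards [hU] with z hz
    simp only [Pi.smul_apply, Pi.sub_apply, smul_eq_mul, emono]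
    refine mul_nonpos_of_nonneg_of_nonpos (inv_nonneg.2 h0.le) (sub_nonpos.2 (Real.exp_le_exp.2 hz))
  · filter_upwards [hV] with z hz
    simp only [Pi.smul_apply, Pi.sub_apply, smul_eq_mul, emono, abs_one]
    rw [le_inv_mul_iff₀ h0, mul_one]
    exact sub_le_sub_right (Real.exp_le_exp.2 hz) _

lemma lim_tri (h1 : ¬ InI U V (fun _ => 1)) (p q : ℝ) :
    (∃ s, Filter.Tendsto (fun z : ℝ × ℝ => p * z.1 + q * z.2) U (nhds s) ∧
      Filter.Tendsto (fun z : ℝ × ℝ => p * z.1 + q * z.2) V (nhds s)) ∨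
    (Filter.Tendsto (fun z : ℝ × ℝ => p * z.1 + q * z.2) U Filter.atTop ∧
      Filter.Tendsto (fun z : ℝ × ℝ => p * z.1 + q * z.2) V Filter.atTop) ∨
    (Filter.Tendsto (fun z : ℝ × ℝ => p * z.1 + q * z.2) U Filter.atBot ∧
      Filter.Tendsto (fun z : ℝ × ℝ => p * z.1 + q * z.2) V Filter.atBot) := by
  have up : ∀ r r', r < r' → (∀ᶠ z in (U : Filter (ℝ × ℝ)), p * z.1 + q * z.2 ≤ r) →
      ∀ᶠ z in (V : Filter (ℝ × ℝ)), p * z.1 + q * z.2 < r' := by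
    intro r r' hr hU
    by_contra h
    rw [← Ultrafilter.eventually_not] at h
    exact h1 (cmp_one p q r r' hr hU (h.mono fun z hz => not_lt.1 hz))
  have dn : ∀ r r', r' < r → (∀ᶠ z in (U : Filter (ℝ × ℝ)), r ≤ p * z.1 + q * z.2) →
      ∀ᶠ z in (V : Filter (ℝ × ℝ)), r' < p * z.1 + q * z.2 := by
    intro r r' hr hU
    by_contra h
    rw [← Ultrafilter.eventually_not] at h
    exact h1 (cmp_one (-p) (-q) (-r) (-r') (by linarith) (hU.mono fun z hz => by linarith)
      (h.mono fun z hz => by have := not_lt.1 hz; linarith))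
  by_cases hT : ∀ r, ∀ᶠ z in (U : Filter (ℝ × ℝ)), r ≤ p * z.1 + q * z.2
  · refine Or.inr (Or.inl ⟨Filter.tendsto_atTop.2 hT, Filter.tendsto_atTop.2 fun r => ?_⟩)
    exact (dn (r+1) r (by linarith) (hT _)).mono fun z hz => hz.le
  by_cases hB : ∀ r, ∀ᶠ z in (U : Filter (ℝ × ℝ)), p * z.1 + q * z.2 ≤ r
  · refine Or.inr (Or.inr ⟨Filter.tendsto_atBot.2 hB, Filter.tendsto_atBot.2 fun r => ?_⟩)
    exact (up (r-1) r (by linarith) (hB _)).mono fun z hz => hz.le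
  push Not at hT hB
  obtain ⟨r, hr⟩ := hT
  obtain ⟨r', hr'⟩ := hB
  left
  obtain ⟨s, -, hs⟩ := (isCompact_Icc (a := r') (b := r)).ultrafilter_le_nhds
    (U.map fun z : ℝ × ℝ => p * z.1 + q * z.2) (by
      rw [Filter.le_principal_iff]
      show ∀ᶠ z in (U : Filter (ℝ × ℝ)), p * z.1 + q * z.2 ∈ Icc r' r
      filter_upwards [hr, hr'] with z a b
      exact ⟨b.le, a.le⟩)
  have hs : Filter.Tendsto (fun z : ℝ × ℝ => p * z.1 + q * z.2) U (nhds s) := hs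
  refine ⟨s, hs, ?_⟩
  rw [tendsto_order] at hs ⊢
  constructor
  · intro a ha
    exact dn ((a+s)/2) a (by linarith) ((hs.1 _ (by linarith : (a+s)/2 < s)).mono fun z hz => hz.le)
  · intro a ha
    exact up ((a+s)/2) a (by linarith) ((hs.2 _ (by linarith : s < (a+s)/2)).mono fun z hz => hz.le)

lemma dom_one (hU : ∀ p q : ℝ, (p, q) ≠ 0 → 
    (Filter.Tendsto (fun z : ℝ × ℝ => p * z.1 + q * z.2) U Filter.atTop ∧
      Filter.Tendsto (fun z : ℝ × ℝ => p * z.1 + q * z.2) V Filter.atTop) ∨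
    (Filter.Tendsto (fun z : ℝ × ℝ => p * z.1 + q * z.2) U Filter.atBot ∧
      Filter.Tendsto (fun z : ℝ × ℝ => p * z.1 + q * z.2) V Filter.atBot))
    {P : ℝ × ℝ → ℝ} (hP : P ∈ ES) (hI : ¬ InI U V P) :
    ∃ D : Set (ℝ × ℝ), Convex ℝ D ∧ D ∈ U ∧ D ∈ V ∧ ∀ z ∈ D, P z ≠ 0 := by
  classical
  obtain ⟨c, hc⟩ := ES_rep hP
  have hne : c.support.Nonempty := by
    rw [Finset.nonempty_iff_ne_empty]
    intro h
    apply hI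
    have : P = fun _ => 0 := by funext z; rw [hc, h]; simp
    rw [this]; exact InI.zero
  have hmax : ∃ l ∈ c.support, ∀ᶠ z in (U : Filter (ℝ × ℝ)), ∀ k ∈ c.support,
      k.1 * z.1 + k.2 * z.2 ≤ l.1 * z.1 + l.2 * z.2 := by
    by_contra hcon
    have h2 : ∀ l ∈ c.support, ∀ᶠ z in (U : Filter (ℝ × ℝ)), ¬ ∀ k ∈ c.support,
      k.1 * z.1 + k.2 * z.2 ≤ l.1 * z.1 + l.2 * z.2 := by
      intro l hl
      rw [Ultrafilter.eventually_not]
      exact fun h => hcon ⟨l, hl, h⟩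
    obtain ⟨z, hz⟩ := ((Filter.eventually_all_finset _).2 h2).exists
    obtain ⟨l, hl, hlm⟩ := c.support.exists_max_image (fun k => k.1 * z.1 + k.2 * z.2) hne
    exact hz l hl hlm
  obtain ⟨l, hl, hlm⟩ := hmax
  have hcl : c l ≠ 0 := Finsupp.mem_support_iff.1 hl
  let S := ∑ k ∈ c.support.erase l, |c k|
  have hS : 0 ≤ S := Finset.sum_nonneg fun _ _ => abs_nonneg _
  let C := Real.log ((S + 1) / |c l|)
  have hC : Real.exp (-C) = |c l| / (S + 1) := by
    have := abs_pos.2 hcl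
    rw [Real.exp_neg, Real.exp_log (by positivity), inv_div]
  have ht : ∀ k ∈ c.support.erase l,
      Filter.Tendsto (fun z : ℝ × ℝ => (l.1 - k.1) * z.1 + (l.2 - k.2) * z.2) U Filter.atTop ∧
      Filter.Tendsto (fun z : ℝ × ℝ => (l.1 - k.1) * z.1 + (l.2 - k.2) * z.2) V Filter.atTop := by
    intro k hk
    rw [Finset.mem_erase] at hk
    rcases hU (l.1 - k.1) (l.2 - k.2) (by
      intro h
      rw [Prod.mk_eq_zero] at h
      exact hk.1 (Prod.ext (by linarith [h.1]) (by linarith [h.2]))) with h | h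
    · exact h
    · exfalso
      obtain ⟨z, h1, h2⟩ := ((h.1.eventually_lt_atBot 0).and hlm).exists
      have := h2 k hk.2
      nlinarith
  refine ⟨⋂ k ∈ c.support.erase l, {z : ℝ × ℝ | C < (l.1 - k.1) * z.1 + (l.2 - k.2) * z.2}, ?_, ?_, ?_, ?_⟩
  · refine convex_iInter₂ fun k _ => ?_
    have : IsLinearMap ℝ (fun z : ℝ × ℝ => (l.1 - k.1) * z.1 + (l.2 - k.2) * z.2) := 
      ⟨fun x y => by simp; ring, fun a x => by simp; ring⟩
    exact convex_halfSpace_gt this C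
  · exact (Filter.biInter_finset_mem _).2 fun k hk => (ht k hk).1.eventually_gt_atTop C
  · exact (Filter.biInter_finset_mem _).2 fun k hk => (ht k hk).2.eventually_gt_atTop C
  · intro z hz h0
    simp only [mem_iInter, mem_ofPred_eq] at hz
    rw [hc, ← Finset.add_sum_erase _ _ hl] at h0
    set E := Real.exp (l.1 * z.1 + l.2 * z.2) with hE
    have hEp : 0 < E := Real.exp_pos _
    have h1 : |∑ k ∈ c.support.erase l, c k * Real.exp (k.1 * z.1 + k.2 * z.2)| ≤ S * (Real.exp (-C) * E) := by
      rw [Finset.sum_mul]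
      refine (Finset.abs_sum_le_sum_abs _ _).trans (Finset.sum_le_sum fun k hk => ?_)
      rw [abs_mul, Real.abs_exp, hE, ← Real.exp_add]
      refine mul_le_mul_of_nonneg_left (Real.exp_le_exp.2 ?_) (abs_nonneg _)
      have := hz k hk
      linarith
    have h2 : |∑ k ∈ c.support.erase l, c k * Real.exp (k.1 * z.1 + k.2 * z.2)| = |c l| * E := by
      rw [show (∑ k ∈ c.support.erase l, c k * Real.exp (k.1 * z.1 + k.2 * z.2)) = -(c l * E) by linarith,
        abs_neg, abs_mul, abs_of_pos hEp]
    rw [h2, hC] at h1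
    have hp := abs_pos.2 hcl
    have : S * (|c l| / (S + 1) * E) < |c l| * E := by
      have e : S * (|c l| / (S + 1) * E) = (S / (S + 1)) * (|c l| * E) := by field_simp
      rw [e]
      have : S / (S + 1) < 1 := by rw [div_lt_one (by linarith)]; linarith
      nlinarith [mul_pos hp hEp]
    linarith

lemma geo_dim0 (hU : ∀ p q : ℝ, (p, q) ≠ 0 → 
    (Filter.Tendsto (fun z : ℝ × ℝ => p * z.1 + q * z.2) U Filter.atTop ∧
      Filter.Tendsto (fun z : ℝ × ℝ => p * z.1 + q * z.2) V Filter.atTop) ∨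
    (Filter.Tendsto (fun z : ℝ × ℝ => p * z.1 + q * z.2) U Filter.atBot ∧
      Filter.Tendsto (fun z : ℝ × ℝ => p * z.1 + q * z.2) V Filter.atBot)) : Geo U V := by
  intro n P hP hI
  choose D hD hDU hDV h0 using fun j => dom_one hU (hP j) (hI j)
  refine ⟨⋂ j, D j, (convex_iInter hD).isPreconnected, ?_, ?_, fun z hz j => h0 j z (mem_iInter.1 hz j)⟩
  · exact Filter.iInter_mem.2 hDU
  · exact Filter.iInter_mem.2 hDV

lemma abs_le_exp_sub (y : ℝ) (hy : |y| ≤ 1) : |y| ≤ |2 * (Real.exp y - 1)| := by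
  rcases le_total 0 y with h | h
  · have := Real.add_one_le_exp y
    rw [abs_of_nonneg h, abs_of_nonneg (by linarith)]; linarith
  · rw [abs_of_nonpos h] at hy ⊢
    have h1 : Real.exp y ≤ 1 := Real.exp_le_one_iff.2 h
    have h2 := Real.add_one_le_exp (-y)
    have h3 : Real.exp y * Real.exp (-y) = 1 := by rw [← Real.exp_add]; simp
    rw [abs_of_nonpos (by linarith)]
    have h4 := Real.exp_pos y
    have : Real.exp y * (-y + 1) ≤ 1 := by nlinarith
    nlinarith

lemma tendsto_abs_le {W : Ultrafilter (ℝ × ℝ)} {f : ℝ × ℝ → ℝ} (h : Filter.Tendsto f W (nhds 0)) : ∀ᶠ z in (W : Filter (ℝ × ℝ)), |f z| ≤ 1 := by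
  have := h.abs
  rw [abs_zero] at this
  exact (this.eventually_lt_const one_pos).mono fun z hz => hz.le

lemma geo_pt0 (hU1 : Filter.Tendsto (fun z : ℝ × ℝ => z.1) U (nhds 0))
    (hU2 : Filter.Tendsto (fun z : ℝ × ℝ => z.2) U (nhds 0))
    (hV1 : Filter.Tendsto (fun z : ℝ × ℝ => z.1) V (nhds 0))
    (hV2 : Filter.Tendsto (fun z : ℝ × ℝ => z.2) V (nhds 0))
    (i1 : InI U V (fun z => Real.exp z.1 - 1)) (i2 : InI U V (fun z => Real.exp z.2 - 1)) : Geo U V := by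
  have j1 : InI U V (fun z => z.1) := (i1.smul 2).of_le
    ((tendsto_abs_le hV1).mono fun z hz => abs_le_exp_sub _ hz)
  have j2 : InI U V (fun z => z.2) := (i2.smul 2).of_le
    ((tendsto_abs_le hV2).mono fun z hz => abs_le_exp_sub _ hz)
  have key : ∀ P ∈ ES, InI U V (fun z => P z - P 0) := by
    intro P hP
    induction hP using Submodule.span_induction with
    | mem f hf =>
      obtain ⟨l, rfl⟩ := hf
      refine (((j1.smul l.1).add (j2.smul l.2)).smul 2).of_le ?_
      have : Filter.Tendsto (fun z : ℝ × ℝ => l.1 * z.1 + l.2 * z.2) V (nhds 0) := by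
        simpa using (hV1.const_mul l.1).add (hV2.const_mul l.2)
      filter_upwards [tendsto_abs_le this] with z hz
      have := Real.abs_exp_sub_one_le hz
      simpa [emono, abs_mul] using this
    | zero => simpa using InI.zero
    | add f g _ _ hf hg =>
      refine (hf.add hg).of_le (Filter.Eventually.of_forall fun z => le_of_eq ?_)
      congr 1; simp; ring
    | smul c f _ hf => 
      refine (hf.smul c).of_le (Filter.Eventually.of_forall fun z => le_of_eq ?_)
      congr 1; simp; ring
  intro n P hP hI
  have hne : ∀ j, P j 0 ≠ 0 := by
    intro j h
    have := key _ (hP j)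
    rw [h] at this
    simp only [sub_zero] at this
    exact hI j this
  have : ∀ᶠ z in nhds (0 : ℝ × ℝ), ∀ j, P j z ≠ 0 :=
    Filter.eventually_all.2 fun j => (ES_continuous (hP j)).continuousAt.eventually_ne (hne j)
  obtain ⟨ε, hε, hb⟩ := Metric.eventually_nhds_iff_ball.1 this
  have hUn : (U : Filter (ℝ × ℝ)) ≤ nhds 0 := hU1.prodMk_nhds hU2
  have hVn : (V : Filter (ℝ × ℝ)) ≤ nhds 0 := hV1.prodMk_nhds hV2
  exact ⟨Metric.ball 0 ε, (convex_ball _ _).isPreconnected, hUn (Metric.ball_mem_nhds _ hε),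
    hVn (Metric.ball_mem_nhds _ hε), hb⟩

lemma geo_pt1 (hU1 : Filter.Tendsto (fun z : ℝ × ℝ => z.1) U (nhds 0))
    (hU2 : Filter.Tendsto (fun z : ℝ × ℝ => z.2) U (nhds 0))
    (hV1 : Filter.Tendsto (fun z : ℝ × ℝ => z.1) V (nhds 0))
    (hV2 : Filter.Tendsto (fun z : ℝ × ℝ => z.2) V (nhds 0))
    (i1 : ¬ InI U V (fun z => Real.exp z.1 - 1)) : Geo U V := by
  have hES : (fun z : ℝ × ℝ => Real.exp z.1 - 1) ∈ ES := by
    have := ES.sub_mem (ES_exp 1 0 0) (ES_const 1)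
    convert this using 1
    funext z; simp
  obtain ⟨σ, h0, h1, h2⟩ := InI.dich hES i1
  rcases lt_or_gt_of_ne h0 with hσ | hσ
  · have aux : ∀ z : ℝ × ℝ, 0 < σ * (Real.exp z.1 - 1) → 0 < -z.1 := by
      intro z hz
      have : Real.exp z.1 - 1 < 0 := by
        by_contra h; push Not at h; nlinarith
      have := Real.exp_lt_one_iff.1 (by linarith : Real.exp z.1 < 1)
      linarith
    let T : ℝ × ℝ → ℝ × ℝ := fun z => (-1 * z.1 + 0 * z.2 + 0, 0 * z.1 + 1 * z.2 + 0)
    refine Geo.transfer T T (by fun_prop) (fun z => by ext <;> simp [T]) (fun f hf => ES_affine _ _ _ _ _ _ hf)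
      (fun f hf => ES_affine _ _ _ _ _ _ hf) ?_
    apply geo_case2
    all_goals first
      | (simp only [Ultrafilter.coe_map, Filter.tendsto_map'_iff, T, Function.comp_def, Filter.eventually_map])
    · simpa using hU1.neg
    · simpa using hV1.neg
    · filter_upwards [h1] with z hz using by simpa using aux z hz
    · filter_upwards [h2] with z hz using by simpa using aux z hz
    · simpa using hU2
    · simpa using hV2
  · have aux : ∀ z : ℝ × ℝ, 0 < σ * (Real.exp z.1 - 1) → 0 < z.1 := by
      intro z hz
      have : 0 < Real.exp z.1 - 1 := by
        by_contra h; push Not at h; nlinarith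
      exact Real.one_lt_exp_iff.1 (by linarith)
    exact geo_case2 hU1 hV1 (h1.mono aux) (h2.mono aux) hU2 hV2

lemma geo_pt (hU1 : Filter.Tendsto (fun z : ℝ × ℝ => z.1) U (nhds 0))
    (hU2 : Filter.Tendsto (fun z : ℝ × ℝ => z.2) U (nhds 0))
    (hV1 : Filter.Tendsto (fun z : ℝ × ℝ => z.1) V (nhds 0))
    (hV2 : Filter.Tendsto (fun z : ℝ × ℝ => z.2) V (nhds 0)) : Geo U V := by
  by_cases i1 : InI U V (fun z => Real.exp z.1 - 1)
  swap
  · exact geo_pt1 hU1 hU2 hV1 hV2 i1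
  by_cases i2 : InI U V (fun z => Real.exp z.2 - 1)
  · exact geo_pt0 hU1 hU2 hV1 hV2 i1 i2
  let T : ℝ × ℝ → ℝ × ℝ := fun z => (0 * z.1 + 1 * z.2 + 0, 1 * z.1 + 0 * z.2 + 0)
  have hTT : ∀ z, T (T z) = z := fun z => by ext <;> simp [T]
  refine Geo.transfer T T (by fun_prop) hTT (fun f hf => ES_affine _ _ _ _ _ _ hf)
      (fun f hf => ES_affine _ _ _ _ _ _ hf) ?_
  apply geo_pt1
  · simpa [Filter.tendsto_map'_iff, T, Function.comp_def] using hU2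
  · simpa [Filter.tendsto_map'_iff, T, Function.comp_def] using hU1
  · simpa [Filter.tendsto_map'_iff, T, Function.comp_def] using hV2
  · simpa [Filter.tendsto_map'_iff, T, Function.comp_def] using hV1
  · rintro ⟨e, he, e1, e2⟩
    refine i2 ⟨fun z => e (T z), ES_affine _ _ _ _ _ _ he, e1, ?_⟩
    have e2 : ∀ᶠ z in (V : Filter (ℝ × ℝ)), |Real.exp (T z).1 - 1| ≤ e (T z) := e2
    simpa [T] using e2

lemma rot_transfer (p q s0 t0 : ℝ) (hpq : (p, q) ≠ 0)
    (hG : Geo (U.map fun z => (-q * z.1 + p * z.2 + -t0, p * z.1 + q * z.2 + -s0))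
      (V.map fun z => (-q * z.1 + p * z.2 + -t0, p * z.1 + q * z.2 + -s0))) : Geo U V := by
  have hN : p ^ 2 + q ^ 2 ≠ 0 := by
    intro h
    apply hpq
    have h1 : p = 0 := by nlinarith [sq_nonneg p, sq_nonneg q]
    have h2 : q = 0 := by nlinarith [sq_nonneg p, sq_nonneg q]
    rw [h1, h2]; rfl
  refine Geo.transfer _ (fun z => ((-q / (p^2+q^2)) * z.1 + (p / (p^2+q^2)) * z.2 + (p * s0 - q * t0) / (p^2+q^2),
    (p / (p^2+q^2)) * z.1 + (q / (p^2+q^2)) * z.2 + (q * s0 + p * t0) / (p^2+q^2))) (by fun_prop) ?_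
    (fun f hf => ES_affine _ _ _ _ _ _ hf)
    (fun f hf => ES_affine _ _ _ _ _ _ hf) hG
  intro z
  ext
  · simp only; field_simp; ring
  · simp only; field_simp; ring

lemma geo_line (p q s0 : ℝ) (hpq : (p, q) ≠ 0)
    (hU1 : Filter.Tendsto (fun z : ℝ × ℝ => -q * z.1 + p * z.2) U Filter.atTop)
    (hU2 : Filter.Tendsto (fun z : ℝ × ℝ => p * z.1 + q * z.2) U (nhds s0))
    (hV1 : Filter.Tendsto (fun z : ℝ × ℝ => -q * z.1 + p * z.2) V Filter.atTop)
    (hV2 : Filter.Tendsto (fun z : ℝ × ℝ => p * z.1 + q * z.2) V (nhds s0)) : Geo U V := by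
  apply rot_transfer p q s0 0 hpq
  apply geo_case1
  all_goals simp only [Ultrafilter.coe_map, Filter.tendsto_map'_iff, Function.comp_def]
  · simpa using hU1
  · simpa using hV1
  · simpa using hU2.add_const (-s0)
  · simpa using hV2.add_const (-s0)

theorem geo_all (U V : Ultrafilter (ℝ × ℝ)) : Geo U V := by
  by_cases h1 : InI U V (fun _ => 1)
  · exact Geo.of_one h1
  by_cases h0 : ∃ p q s : ℝ, (p, q) ≠ 0 ∧ Filter.Tendsto (fun z : ℝ × ℝ => p * z.1 + q * z.2) U (nhds s) ∧
      Filter.Tendsto (fun z : ℝ × ℝ => p * z.1 + q * z.2) V (nhds s)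
  · obtain ⟨p, q, s, hpq, hU, hV⟩ := h0
    rcases lim_tri h1 (-q) p with ⟨t, hU', hV'⟩ | ⟨hU', hV'⟩ | ⟨hU', hV'⟩
    · apply rot_transfer p q s t hpq
      apply geo_pt
      all_goals simp only [Ultrafilter.coe_map, Filter.tendsto_map'_iff, Function.comp_def]
      · simpa using hU'.add_const (-t)
      · simpa using hU.add_const (-s)
      · simpa using hV'.add_const (-t)
      · simpa using hV.add_const (-s)
    · exact geo_line p q s hpq hU' hU hV' hV
    · refine geo_line (-p) (-q) (-s) (by simpa using hpq) ?_ ?_ ?_ ?_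
      · refine (Filter.tendsto_neg_atBot_atTop.comp hU').congr fun z => ?_
        simp; ring
      · refine hU.neg.congr fun z => by ring
      · refine (Filter.tendsto_neg_atBot_atTop.comp hV').congr fun z => ?_
        simp; ring
      · refine hV.neg.congr fun z => by ring
  · apply geo_dim0
    intro p q hpq
    rcases lim_tri h1 p q with ⟨t, hU', hV'⟩ | h | h
    · exact absurd ⟨p, q, t, hpq, hU', hV'⟩ h0
    · exact Or.inl h
    · exact Or.inr h

end

lemma uf_pigeon {n : ℕ} (U : Ultrafilter (ℝ × ℝ)) (p : Fin n → ℝ × ℝ → Prop) (h : ∀ z, ∃ i, p i z) :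
    ∃ i, ∀ᶠ z in (U : Filter (ℝ × ℝ)), p i z := by
  by_contra hcon
  have h2 : ∀ i, ∀ᶠ z in (U : Filter (ℝ × ℝ)), ¬ p i z := fun i => by
    rw [Ultrafilter.eventually_not]
    exact fun h => hcon ⟨i, h⟩
  obtain ⟨z, hz⟩ := (Filter.eventually_all.2 h2).exists
  obtain ⟨i, hi⟩ := h z
  exact hz i hi

lemma sep {H : ℝ × ℝ → ℝ} (hH : Continuous H) {n : ℕ} (g : Fin n → ℝ × ℝ → ℝ) (hg : ∀ i, g i ∈ ES)
    (hcov : ∀ z, ∃ i, H z = g i z) (U V : Ultrafilter (ℝ × ℝ)) :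
    ∃ e ∈ ES, (∀ᶠ z in (U : Filter (ℝ × ℝ)), e z ≤ H z) ∧ ∀ᶠ z in (V : Filter (ℝ × ℝ)), H z ≤ e z := by
  classical
  obtain ⟨i, hi⟩ := uf_pigeon U (fun i z => H z = g i z) hcov
  obtain ⟨j, hj⟩ := uf_pigeon V (fun i z => H z = g i z) hcov
  have hij : InI U V (fun z => g j z - g i z) := by
    by_contra hbad
    let Δ := {p : Fin n × Fin n // ¬ InI U V (fun z => g p.1 z - g p.2 z)}
    let ε : Δ ≃ Fin (Fintype.card Δ) := Fintype.equivFin Δ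
    obtain ⟨D, hD, hDU, hDV, hD0⟩ := geo_all U V _ (fun k z => g (ε.symm k).1.1 z - g (ε.symm k).1.2 z)
      (fun k => ES.sub_mem (hg _) (hg _)) (fun k => (ε.symm k).2)
    have hD1 : ∀ z ∈ D, ∀ k l, ¬ InI U V (fun z => g k z - g l z) → g k z ≠ g l z := by
      intro z hz k l hkl h
      have := hD0 z hz (ε ⟨(k, l), hkl⟩)
      simp only [Equiv.symm_apply_apply] at this
      exact this (sub_eq_zero.2 h)
    let cl : (Fin n → Prop) → Set (ℝ × ℝ) := fun q => ⋃ l : {l // q l}, {z | H z = g l z}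
    have hcl : ∀ q, IsClosed (cl q) := fun q => isClosed_iUnion_of_finite fun l =>
      isClosed_eq hH (ES_continuous (hg _))
    have hmem : ∀ q z, z ∈ cl q ↔ ∃ l, q l ∧ H z = g l z := by
      intro q z
      constructor
      · intro h
        obtain ⟨l, hl⟩ := mem_iUnion.1 h
        exact ⟨l, l.2, hl⟩
      · rintro ⟨l, h1, h2⟩
        exact mem_iUnion.2 ⟨⟨l, h1⟩, h2⟩
    let q1 : Fin n → Prop := fun l => InI U V (fun z => g l z - g i z)
    obtain ⟨z, hz, hz1, hz2⟩ := isPreconnected_closed_iff.1 hD (cl q1) (cl fun l => ¬ q1 l) (hcl _) (hcl _)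
      (by
        intro z _
        obtain ⟨l, hl⟩ := hcov z
        by_cases h : q1 l
        · exact Or.inl ((hmem _ _).2 ⟨l, h, hl⟩)
        · exact Or.inr ((hmem _ _).2 ⟨l, h, hl⟩))
      (by
        have hDU : ∀ᶠ z in (U : Filter (ℝ × ℝ)), z ∈ D := hDU
        obtain ⟨z, h1, h2⟩ := (hDU.and hi).exists
        exact ⟨z, h1, (hmem _ _).2 ⟨i, by simpa [q1] using InI.zero, h2⟩⟩)
      (by
        have hDV : ∀ᶠ z in (V : Filter (ℝ × ℝ)), z ∈ D := hDV
        obtain ⟨z, h1, h2⟩ := (hDV.and hj).exists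
        exact ⟨z, h1, (hmem _ _).2 ⟨j, hbad, h2⟩⟩)
    obtain ⟨l, hl1, hl2⟩ := (hmem _ _).1 hz1
    obtain ⟨m, hm1, hm2⟩ := (hmem _ _).1 hz2
    refine hD1 z hz m l (fun hml => hm1 ?_) (by rw [← hm2, ← hl2])
    refine (hml.add hl1).of_le (Filter.Eventually.of_forall fun z => le_of_eq ?_)
    congr 1; ring
  obtain ⟨e, he, e1, e2⟩ := hij
  refine ⟨g i + e, ES.add_mem (hg i) he, ?_, ?_⟩
  · filter_upwards [hi, e1] with z h1 h2
    rw [h1, Pi.add_apply]; linarith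
  · filter_upwards [hj, e2] with z h1 h2
    rw [h1, Pi.add_apply]; linarith [le_abs_self (g j z - g i z)]

lemma fin_cov {α ι : Type*} (s : ι → Set α) (h : ∀ U : Ultrafilter α, ∃ i, s i ∈ U) :
    ∃ T : Finset ι, ∀ z, ∃ i ∈ T, z ∈ s i := by
  obtain ⟨T, hT⟩ := (isCompact_univ (X := Ultrafilter α)).elim_finite_subcover
    (fun i => {U : Ultrafilter α | s i ∈ U}) (fun i => ultrafilter_isOpen_basic _)
    (fun U _ => mem_iUnion.2 (h U))
  refine ⟨T, fun z => ?_⟩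
  obtain ⟨i, hi, h2⟩ := mem_iUnion₂.1 (hT (mem_univ (pure z : Ultrafilter α)))
  exact ⟨i, hi, Ultrafilter.mem_pure.1 h2⟩

lemma enum_fin {α : Type*} (s : Finset α) (hs : s.Nonempty) :
    ∃ (J : ℕ) (v : Fin (J + 1) → α), ∀ a, a ∈ s ↔ ∃ j, v j = a := by
  obtain ⟨J, hJ⟩ := Nat.exists_eq_succ_of_ne_zero hs.card_ne_zero
  refine ⟨J, fun j => (s.equivFinOfCardEq hJ).symm j, fun a => ⟨fun ha => ⟨s.equivFinOfCardEq hJ ⟨a, ha⟩, by simp⟩, ?_⟩⟩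
  rintro ⟨j, rfl⟩
  exact Subtype.mem _

lemma supinf_ES {H : ℝ × ℝ → ℝ} (hH : Continuous H) {n : ℕ} (g : Fin n → ℝ × ℝ → ℝ) (hg : ∀ i, g i ∈ ES)
    (hcov : ∀ z, ∃ i, H z = g i z) : ∃ (J : ℕ) (K : Fin (J + 1) → ℕ)
    (f : (j : Fin (J + 1)) → Fin (K j + 1) → ℝ × ℝ → ℝ), (∀ j k, f j k ∈ ES) ∧
    ∀ z, H z = ⨆ j, ⨅ k, f j k z := by
  have h1 : ∀ V : Ultrafilter (ℝ × ℝ), ∃ (K : ℕ) (f : Fin (K + 1) → ℝ × ℝ → ℝ), (∀ k, f k ∈ ES) ∧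
      (∀ k, ∀ᶠ z in (V : Filter (ℝ × ℝ)), H z ≤ f k z) ∧ ∀ z, ∃ k, f k z ≤ H z := by
    intro V
    obtain ⟨T, hT⟩ := fin_cov (fun e : {e : ℝ × ℝ → ℝ // e ∈ ES ∧ ∀ᶠ z in (V : Filter (ℝ × ℝ)), H z ≤ e z} =>
      {z | e.1 z ≤ H z}) (fun U => by
        obtain ⟨e, he, e1, e2⟩ := sep hH g hg hcov U V
        exact ⟨⟨e, he, e2⟩, e1⟩)
    obtain ⟨K, v, hv⟩ := enum_fin T (by obtain ⟨i, hi, -⟩ := hT 0; exact ⟨i, hi⟩)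
    refine ⟨K, fun k => (v k).1, fun k => (v k).2.1, fun k => (v k).2.2, fun z => ?_⟩
    obtain ⟨e, he, h⟩ := hT z
    obtain ⟨k, rfl⟩ := (hv e).1 he
    exact ⟨k, h⟩
  choose K f hf hfV hfz using h1
  obtain ⟨T, hT⟩ := fin_cov (fun V : Ultrafilter (ℝ × ℝ) => {z | ∀ k, H z ≤ f V k z})
    (fun V => ⟨V, Filter.eventually_all.2 (hfV V)⟩)
  obtain ⟨J, v, hv⟩ := enum_fin T (by obtain ⟨i, hi, -⟩ := hT 0; exact ⟨i, hi⟩)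
  refine ⟨J, fun j => K (v j), fun j => f (v j), fun j k => hf _ _, fun z => le_antisymm ?_ ?_⟩
  · obtain ⟨V, hV, h⟩ := hT z
    obtain ⟨j, rfl⟩ := (hv V).1 hV
    exact (le_ciInf h).trans (le_ciSup (f := fun j => ⨅ k, f (v j) k z) (Set.finite_range _).bddAbove j)
  · refine ciSup_le fun j => ?_
    obtain ⟨k, hk⟩ := hfz (v j) z
    exact (ciInf_le (Set.finite_range _).bddBelow k).trans hk

lemma genPoly_of_ES {f : ℝ × ℝ → ℝ} (hf : f ∈ ES) :
    IsGenPoly (fun p : PQ => f (Real.log p.1.1, Real.log p.1.2)) := by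
  obtain ⟨c, hc⟩ := ES_rep hf
  refine ⟨c.support.card, fun i => c (c.support.equivFin.symm i).1, fun i => (c.support.equivFin.symm i).1,
    fun i => Finsupp.mem_support_iff.1 (Subtype.mem _), Subtype.val_injective.comp (Equiv.injective _), fun p => ?_⟩
  beta_reduce
  rw [hc]
  rw [Equiv.sum_comp c.support.equivFin.symm
    (fun l : c.support => c l.1 * p.1.1 ^ (l.1).1 * p.1.2 ^ (l.1).2)]
  rw [Finset.sum_coe_sort c.support (fun l => c l * p.1.1 ^ l.1 * p.1.2 ^ l.2)]
  refine Finset.sum_congr rfl fun l _ => ?_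
  rw [Real.rpow_def_of_pos p.2.1, Real.rpow_def_of_pos p.2.2, mul_assoc, ← Real.exp_add]
  simp only
  congr 2; ring

/-- exponential chart -/
def toPQ (z : ℝ × ℝ) : PQ := ⟨(Real.exp z.1, Real.exp z.2), Real.exp_pos _, Real.exp_pos _⟩

lemma ES_of_genPoly {a : PQ → ℝ} (ha : IsGenPoly a) : (fun z => a (toPQ z)) ∈ ES := by
  obtain ⟨m, c, α, -, -, h⟩ := ha
  have : (fun z => a (toPQ z)) = ∑ i, c i • emono (α i) := by
    funext z
    rw [h, Finset.sum_apply]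
    refine Finset.sum_congr rfl fun i _ => ?_
    simp only [toPQ, Pi.smul_apply, smul_eq_mul, emono]
    rw [← Real.exp_mul, ← Real.exp_mul, mul_assoc, ← Real.exp_add]
    congr 2; ring
  rw [this]
  exact ES.sum_mem fun i _ => ES.smul_mem _ (emono_mem _)

/-- The Pierce–Birkhoff conjecture for generalized polynomials in two variables. -/
theorem pierce_birkhoff_generalized_two_vars (h : PQ → ℝ)
    (hc : Continuous h) (hpw : IsPiecewiseGenPoly h) :
    IsSupInf h := by
  obtain ⟨n, g, hg, -, -, hcov⟩ := hpw
  have hto : Continuous toPQ := by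
    unfold toPQ
    exact Continuous.subtype_mk (by fun_prop) _
  obtain ⟨J, K, f, hf, hH⟩ := supinf_ES (hc.comp hto) (fun i z => g i (toPQ z))
    (fun i => ES_of_genPoly (hg i)) (fun z => hcov (toPQ z))
  refine ⟨J, K, fun j k p => f j k (Real.log p.1.1, Real.log p.1.2), fun j k => genPoly_of_ES (hf j k), fun p => ?_⟩
  rw [← hH]
  have : toPQ (Real.log p.1.1, Real.log p.1.2) = p := by
    apply Subtype.ext
    simp only [toPQ]
    rw [Real.exp_log p.2.1, Real.exp_log p.2.2]
  rw [Function.comp_apply, this]
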